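/- There exists a universal constant C_b > 0 (used in the penalty of VI-LCB-Game) such that for γ ∈ [1/2,1) and δ ∈ (0,1), with probability at least 1−δ over the dataset, every output of Algorithm VI-LCB-Game satisfies, entrywise: Q_pe^− ≤ Q^{μ̂,⋆}, Q_pe^+ ≥ Q^{⋆,ν̂}, V_pe^− ≤ V^{μ̂,⋆}, and V_pe^+ ≥ V^{⋆,ν̂}. -/

import Mathlib

open scoped BigOperators ENNReal Classical

noncomputable section

namespace ZSMG

variable {𝒮 𝒜 ℬ : Type} [Fintype 𝒮] [Fintype 𝒜] [Fintype ℬ]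
  [DecidableEq 𝒮] [DecidableEq 𝒜] [DecidableEq ℬ]

/-- Expectation of `V : 𝒮 → ℝ` under the (sub)probability vector `p`. -/
def Pexp (p V : 𝒮 → ℝ) : ℝ := ∑ s', p s' * V s'

/-- Variance of `V` under `p`: `Var_p(V) = p(V∘V) − (pV)²`. -/
def varP (p V : 𝒮 → ℝ) : ℝ := Pexp p (fun s => V s * V s) - (Pexp p V) ^ 2

/-- Payoff of mixed strategies `w, z` in the matrix game `M`. -/
def pay (M : 𝒜 → ℬ → ℝ) (w : 𝒜 → ℝ) (z : ℬ → ℝ) : ℝ :=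
  ∑ a, ∑ b, w a * z b * M a b

/-- Value function associated with a Q-function: minimax value at each state. -/
def valQ (Q : 𝒮 → 𝒜 → ℬ → ℝ) (s : 𝒮) : ℝ :=
  ⨆ w : stdSimplex ℝ 𝒜, ⨅ z : stdSimplex ℝ ℬ, pay (Q s) w.1 z.1

/-- Sup norm over states. -/
def supNormS (f : 𝒮 → ℝ) : ℝ := ⨆ s, |f s|

/-- Sup norm over state-action triples. -/
def supNormQ (f : 𝒮 → 𝒜 → ℬ → ℝ) : ℝ := ⨆ s, ⨆ a, ⨆ b, |f s a b|

/-- The Bernstein-style penalty `β(s,a,b;V)`; `n` is the count `N(s,a,b)` and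
`p` is the row `P̂(·|s,a,b)` of the empirical kernel. -/
def penalty (γ δ Cb : ℝ) (N n : ℕ) (p V : 𝒮 → ℝ) : ℝ :=
  (if n = 0 then 1 / (1 - γ)
   else
     min
       (max (Real.sqrt (Cb * Real.log ((N : ℝ) / ((1 - γ) * δ)) * varP p V / (n : ℝ)))
         (2 * Cb * Real.log ((N : ℝ) / ((1 - γ) * δ)) / ((1 - γ) * (n : ℝ))))
       (1 / (1 - γ))) + 4 / (N : ℝ)

/-- The pessimistic Bellman operator for the max-player. -/
def TpeMinus (γ δ Cb : ℝ) (N : ℕ) (n : 𝒮 → 𝒜 → ℬ → ℕ)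
    (Ph : 𝒮 → 𝒜 → ℬ → 𝒮 → ℝ) (rh : 𝒮 → 𝒜 → ℬ → ℝ)
    (Q : 𝒮 → 𝒜 → ℬ → ℝ) : 𝒮 → 𝒜 → ℬ → ℝ := fun s a b =>
  max (rh s a b + γ * Pexp (Ph s a b) (valQ Q)
        - penalty γ δ Cb N (n s a b) (Ph s a b) (valQ Q)) 0

/-- The pessimistic Bellman operator for the min-player. -/
def TpePlus (γ δ Cb : ℝ) (N : ℕ) (n : 𝒮 → 𝒜 → ℬ → ℕ)
    (Ph : 𝒮 → 𝒜 → ℬ → 𝒮 → ℝ) (rh : 𝒮 → 𝒜 → ℬ → ℝ)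
    (Q : 𝒮 → 𝒜 → ℬ → ℝ) : 𝒮 → 𝒜 → ℬ → ℝ := fun s a b =>
  min (rh s a b + γ * Pexp (Ph s a b) (valQ Q)
        + penalty γ δ Cb N (n s a b) (Ph s a b) (valQ Q)) (1 / (1 - γ))

/-- Count `N(s,a,b)` of occurrences of `(s,a,b)` in the dataset `D`. -/
def cnt {N : ℕ} (D : Fin N → 𝒮 × 𝒜 × ℬ × 𝒮) (s : 𝒮) (a : 𝒜) (b : ℬ) : ℕ :=
  (Finset.univ.filter fun i => (D i).1 = s ∧ (D i).2.1 = a ∧ (D i).2.2.1 = b).card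

/-- Count of full transitions `(s,a,b,s')` in the dataset `D`. -/
def cntT {N : ℕ} (D : Fin N → 𝒮 × 𝒜 × ℬ × 𝒮) (s : 𝒮) (a : 𝒜) (b : ℬ) (s' : 𝒮) : ℕ :=
  (Finset.univ.filter fun i => D i = (s, a, b, s')).card

/-- Empirical transition kernel `P̂(·|s,a,b)` built from the dataset. -/
def Phat {N : ℕ} (D : Fin N → 𝒮 × 𝒜 × ℬ × 𝒮) (s : 𝒮) (a : 𝒜) (b : ℬ) : 𝒮 → ℝ := fun s' =>
  if cnt D s a b = 0 then ((Fintype.card 𝒮 : ℝ))⁻¹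
  else (cntT D s a b s' : ℝ) / (cnt D s a b : ℝ)

/-- Empirical reward `r̂` built from the dataset. -/
def rhat {N : ℕ} (r : 𝒮 → 𝒜 → ℬ → ℝ) (D : Fin N → 𝒮 × 𝒜 × ℬ × 𝒮)
    (s : 𝒮) (a : 𝒜) (b : ℬ) : ℝ :=
  if cnt D s a b = 0 then 0 else r s a b

/-- Number of iterations `T = ⌈log(N/(1−γ))/log(1/γ)⌉` of VI-LCB-Game. -/
def Titer (γ : ℝ) (N : ℕ) : ℕ := ⌈Real.log ((N : ℝ) / (1 - γ)) / Real.log (1 / γ)⌉₊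

/-- `Q_pe^− = Q⁻_T` produced by VI-LCB-Game on the dataset `D`. -/
def QpeMinus (γ δ Cb : ℝ) (r : 𝒮 → 𝒜 → ℬ → ℝ) {N : ℕ}
    (D : Fin N → 𝒮 × 𝒜 × ℬ × 𝒮) : 𝒮 → 𝒜 → ℬ → ℝ :=
  (TpeMinus γ δ Cb N (cnt D) (Phat D) (rhat r D))^[Titer γ N] (fun _ _ _ => 0)

/-- `Q_pe^+ = Q⁺_T` produced by VI-LCB-Game on the dataset `D`. -/
def QpePlus (γ δ Cb : ℝ) (r : 𝒮 → 𝒜 → ℬ → ℝ) {N : ℕ}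
    (D : Fin N → 𝒮 × 𝒜 × ℬ × 𝒮) : 𝒮 → 𝒜 → ℬ → ℝ :=
  (TpePlus γ δ Cb N (cnt D) (Phat D) (rhat r D))^[Titer γ N] (fun _ _ _ => 1 / (1 - γ))

/-- `(w,z)` is a (mixed) Nash equilibrium / saddle point of the matrix game `M`. -/
def IsMatrixNash (M : 𝒜 → ℬ → ℝ) (w : 𝒜 → ℝ) (z : ℬ → ℝ) : Prop :=
  w ∈ stdSimplex ℝ 𝒜 ∧ z ∈ stdSimplex ℝ ℬ ∧
    (∀ w' ∈ stdSimplex ℝ 𝒜, pay M w' z ≤ pay M w z) ∧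
    (∀ z' ∈ stdSimplex ℝ ℬ, pay M w z ≤ pay M w z')

/-- `μ` is a possible max-player output of the algorithm, given the final Q-estimate `Q`. -/
def IsOutputMax (Q : 𝒮 → 𝒜 → ℬ → ℝ) (μ : 𝒮 → 𝒜 → ℝ) : Prop :=
  ∀ s, ∃ z, IsMatrixNash (Q s) (μ s) z

/-- `ν` is a possible min-player output of the algorithm, given the final Q-estimate `Q`. -/
def IsOutputMin (Q : 𝒮 → 𝒜 → ℬ → ℝ) (ν : 𝒮 → ℬ → ℝ) : Prop :=
  ∀ s, ∃ w, IsMatrixNash (Q s) w (ν s)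

/-- `μ` is a stationary (Markov) policy. -/
def IsPolicy (μ : 𝒮 → 𝒜 → ℝ) : Prop := ∀ s, μ s ∈ stdSimplex ℝ 𝒜

/-- `P` is a probability transition kernel. -/
def IsKernel (P : 𝒮 → 𝒜 → ℬ → 𝒮 → ℝ) : Prop := ∀ s a b, P s a b ∈ stdSimplex ℝ 𝒮

/-- `r` is a reward function with values in `[0,1]`. -/
def IsReward (r : 𝒮 → 𝒜 → ℬ → ℝ) : Prop := ∀ s a b, r s a b ∈ Set.Icc (0 : ℝ) 1

/-- `d` is a probability distribution over `𝒮 × 𝒜 × ℬ`. -/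
def IsDist3 (d : 𝒮 → 𝒜 → ℬ → ℝ) : Prop :=
  (∀ s a b, 0 ≤ d s a b) ∧ (∑ s, ∑ a, ∑ b, d s a b) = 1

/-- Transition matrix `P^{μ,ν}` of the product policy `μ × ν`. -/
def Pmat (P : 𝒮 → 𝒜 → ℬ → 𝒮 → ℝ) (μ : 𝒮 → 𝒜 → ℝ) (ν : 𝒮 → ℬ → ℝ) :
    Matrix 𝒮 𝒮 ℝ :=
  Matrix.of fun s s' => ∑ a, ∑ b, μ s a * ν s b * P s a b s'

/-- Reward vector `r^{μ,ν}` of the product policy `μ × ν`. -/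
def rPol (r : 𝒮 → 𝒜 → ℬ → ℝ) (μ : 𝒮 → 𝒜 → ℝ) (ν : 𝒮 → ℬ → ℝ) : 𝒮 → ℝ :=
  fun s => ∑ a, ∑ b, μ s a * ν s b * r s a b

/-- Value function `V^{μ,ν} = (I − γP^{μ,ν})⁻¹ r^{μ,ν}`. -/
def Vpol (γ : ℝ) (P : 𝒮 → 𝒜 → ℬ → 𝒮 → ℝ) (r : 𝒮 → 𝒜 → ℬ → ℝ)
    (μ : 𝒮 → 𝒜 → ℝ) (ν : 𝒮 → ℬ → ℝ) : 𝒮 → ℝ :=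
  Matrix.mulVec ((1 : Matrix 𝒮 𝒮 ℝ) - γ • Pmat P μ ν)⁻¹ (rPol r μ ν)

/-- `V^{μ,⋆}(s) = min_ν V^{μ,ν}(s)`. -/
def VmuStar (γ : ℝ) (P : 𝒮 → 𝒜 → ℬ → 𝒮 → ℝ) (r : 𝒮 → 𝒜 → ℬ → ℝ)
    (μ : 𝒮 → 𝒜 → ℝ) : 𝒮 → ℝ := fun s =>
  ⨅ ν : {ν : 𝒮 → ℬ → ℝ // IsPolicy ν}, Vpol γ P r μ ν.1 s

/-- `V^{⋆,ν}(s) = max_μ V^{μ,ν}(s)`. -/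
def VstarNu (γ : ℝ) (P : 𝒮 → 𝒜 → ℬ → 𝒮 → ℝ) (r : 𝒮 → 𝒜 → ℬ → ℝ)
    (ν : 𝒮 → ℬ → ℝ) : 𝒮 → ℝ := fun s =>
  ⨆ μ : {μ : 𝒮 → 𝒜 → ℝ // IsPolicy μ}, Vpol γ P r μ.1 ν s

/-- `Q^{μ,ν}(s,a,b) = r(s,a,b) + γ P(·|s,a,b) V^{μ,ν}`. -/
def Qpol (γ : ℝ) (P : 𝒮 → 𝒜 → ℬ → 𝒮 → ℝ) (r : 𝒮 → 𝒜 → ℬ → ℝ)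
    (μ : 𝒮 → 𝒜 → ℝ) (ν : 𝒮 → ℬ → ℝ) : 𝒮 → 𝒜 → ℬ → ℝ := fun s a b =>
  r s a b + γ * Pexp (P s a b) (Vpol γ P r μ ν)

/-- `Q^{μ,⋆}(s,a,b) = min_ν Q^{μ,ν}(s,a,b)`. -/
def QmuStar (γ : ℝ) (P : 𝒮 → 𝒜 → ℬ → 𝒮 → ℝ) (r : 𝒮 → 𝒜 → ℬ → ℝ)
    (μ : 𝒮 → 𝒜 → ℝ) : 𝒮 → 𝒜 → ℬ → ℝ := fun s a b =>
  ⨅ ν : {ν : 𝒮 → ℬ → ℝ // IsPolicy ν}, Qpol γ P r μ ν.1 s a b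

/-- `Q^{⋆,ν}(s,a,b) = max_μ Q^{μ,ν}(s,a,b)`. -/
def QstarNu (γ : ℝ) (P : 𝒮 → 𝒜 → ℬ → 𝒮 → ℝ) (r : 𝒮 → 𝒜 → ℬ → ℝ)
    (ν : 𝒮 → ℬ → ℝ) : 𝒮 → 𝒜 → ℬ → ℝ := fun s a b =>
  ⨆ μ : {μ : 𝒮 → 𝒜 → ℝ // IsPolicy μ}, Qpol γ P r μ.1 ν s a b

/-- `(μs, νs)` is a Nash equilibrium of the Markov game. -/
def IsNashPair (γ : ℝ) (P : 𝒮 → 𝒜 → ℬ → 𝒮 → ℝ) (r : 𝒮 → 𝒜 → ℬ → ℝ)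
    (μs : 𝒮 → 𝒜 → ℝ) (νs : 𝒮 → ℬ → ℝ) : Prop :=
  IsPolicy μs ∧ IsPolicy νs ∧
    (∀ μ, IsPolicy μ → ∀ s, Vpol γ P r μ νs s ≤ Vpol γ P r μs νs s) ∧
    (∀ ν, IsPolicy ν → ∀ s, Vpol γ P r μs νs s ≤ Vpol γ P r μs ν s)

/-- `V(ρ) = Σ_s ρ(s) V(s)`. -/
def wAvg (ρ V : 𝒮 → ℝ) : ℝ := ∑ s, ρ s * V s

/-- Discounted occupancy measure `d^{μ,ν}(s;ρ) = (1−γ) ρᵀ(I−γP^{μ,ν})⁻¹`. -/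
def dOcc (γ : ℝ) (P : 𝒮 → 𝒜 → ℬ → 𝒮 → ℝ) (μ : 𝒮 → 𝒜 → ℝ) (ν : 𝒮 → ℬ → ℝ)
    (ρ : 𝒮 → ℝ) : 𝒮 → ℝ := fun s =>
  (1 - γ) * Matrix.vecMul ρ ((1 : Matrix 𝒮 𝒮 ℝ) - γ • Pmat P μ ν)⁻¹ s

/-- `d^{μ,ν}(s,a,b;ρ) = d^{μ,ν}(s;ρ) μ(a|s) ν(b|s)`. -/
def dOcc3 (γ : ℝ) (P : 𝒮 → 𝒜 → ℬ → 𝒮 → ℝ) (μ : 𝒮 → 𝒜 → ℝ) (ν : 𝒮 → ℬ → ℝ)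
    (ρ : 𝒮 → ℝ) : 𝒮 → 𝒜 → ℬ → ℝ := fun s a b =>
  dOcc γ P μ ν ρ s * μ s a * ν s b

/-- Clipped unilateral concentrability coefficient `C⋆_clipped` (in `ℝ≥0∞`;
note that in `ℝ≥0∞` one has `x/0 = ∞` for `x ≠ 0` and `0/0 = 0`, matching the
convention of the paper). -/
def clipCoeff (γ : ℝ) (P : 𝒮 → 𝒜 → ℬ → 𝒮 → ℝ) (ρ : 𝒮 → ℝ) (d : 𝒮 → 𝒜 → ℬ → ℝ)
    (μs : 𝒮 → 𝒜 → ℝ) (νs : 𝒮 → ℬ → ℝ) : ℝ≥0∞ :=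
  max
    (⨆ (μ : {μ : 𝒮 → 𝒜 → ℝ // IsPolicy μ}) (s : 𝒮) (a : 𝒜) (b : ℬ),
      ENNReal.ofReal
          (min (dOcc3 γ P μ.1 νs ρ s a b)
            ((Fintype.card 𝒮 * (Fintype.card 𝒜 + Fintype.card ℬ) : ℝ))⁻¹) /
        ENNReal.ofReal (d s a b))
    (⨆ (ν : {ν : 𝒮 → ℬ → ℝ // IsPolicy ν}) (s : 𝒮) (a : 𝒜) (b : ℬ),
      ENNReal.ofReal
          (min (dOcc3 γ P μs ν.1 ρ s a b)
            ((Fintype.card 𝒮 * (Fintype.card 𝒜 + Fintype.card ℬ) : ℝ))⁻¹) /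
        ENNReal.ofReal (d s a b))

/-- Probability weight of an individual dataset under `(d_b, P)`. -/
def dsWeight {N : ℕ} (d : 𝒮 → 𝒜 → ℬ → ℝ) (P : 𝒮 → 𝒜 → ℬ → 𝒮 → ℝ)
    (D : Fin N → 𝒮 × 𝒜 × ℬ × 𝒮) : ℝ :=
  ∏ i, d (D i).1 (D i).2.1 (D i).2.2.1 * P (D i).1 (D i).2.1 (D i).2.2.1 (D i).2.2.2

/-- Probability of an event over the offline dataset. -/
def dsProb {N : ℕ} (d : 𝒮 → 𝒜 → ℬ → ℝ) (P : 𝒮 → 𝒜 → ℬ → 𝒮 → ℝ)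
    (E : Set (Fin N → 𝒮 × 𝒜 × ℬ × 𝒮)) : ℝ :=
  ∑ D : Fin N → 𝒮 × 𝒜 × ℬ × 𝒮, E.indicator (dsWeight d P) D

/-- Expectation of a function of the offline dataset. -/
def dsExp {N : ℕ} (d : 𝒮 → 𝒜 → ℬ → ℝ) (P : 𝒮 → 𝒜 → ℬ → 𝒮 → ℝ)
    (g : (Fin N → 𝒮 × 𝒜 × ℬ × 𝒮) → ℝ) : ℝ :=
  ∑ D : Fin N → 𝒮 × 𝒜 × ℬ × 𝒮, dsWeight d P D * g D

/-- Dirac (deterministic) policy for the min-player. -/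
def diracB (f : 𝒮 → ℬ) : 𝒮 → ℬ → ℝ := fun s b => if b = f s then 1 else 0

/-- Binomial pmf. -/
def binomPMF (n : ℕ) (p : ℝ) (k : ℕ) : ℝ :=
  (n.choose k : ℝ) * p ^ k * (1 - p) ^ (n - k)

/-- Probability of a set of outcomes under a `Binomial(n,p)` distribution. -/
def binomProb (n : ℕ) (p : ℝ) (E : Set ℕ) : ℝ :=
  ∑ k ∈ Finset.range (n + 1), E.indicator (binomPMF n p) k

/-- Weight of an i.i.d. sample from a distribution on a finite set. -/
def iidWeight {𝒳 : Type} {N : ℕ} (d : 𝒳 → ℝ) (ω : Fin N → 𝒳) : ℝ := ∏ i, d (ω i)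

/-- Probability of an event for `N` i.i.d. draws from `d`. -/
def iidProb {𝒳 : Type} [Fintype 𝒳] {N : ℕ} (d : 𝒳 → ℝ) (E : Set (Fin N → 𝒳)) : ℝ :=
  ∑ ω : Fin N → 𝒳, E.indicator (iidWeight d) ω

/-- Number of occurrences of `x` in the sample `ω`. -/
def iidCount {𝒳 : Type} [DecidableEq 𝒳] {N : ℕ} (ω : Fin N → 𝒳) (x : 𝒳) : ℕ :=
  (Finset.univ.filter fun i => ω i = x).card

/-- Transition kernel of the hard instance `ℳ𝒢_θ`. -/
def hardP {S A B : ℕ} (θ : Fin A → ℝ) : Fin S → Fin A → Fin B → Fin S → ℝ :=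
  fun s a b s' =>
    if s.val = 0 ∧ b.val = 0 then
      θ a * (if s'.val = 0 then 1 else 0) + (1 - θ a) * (if s'.val = 1 then 1 else 0)
    else if s' = s then 1 else 0

/-- Reward of the hard instance: `r(s,a,b) = 1{s = 0}`. -/
def hardR {S A B : ℕ} : Fin S → Fin A → Fin B → ℝ := fun s _ _ => if s.val = 0 then 1 else 0

end ZSMG


namespace ZSMG

variable {𝒮 𝒜 ℬ : Type} [Fintype 𝒮] [Fintype 𝒜] [Fintype ℬ]

/-! ### Self-normalised exponential moments -/

lemma exp_sub_sq_le_one_add {y : ℝ} (hy : |y| ≤ 1 / 2) : Real.exp (y - y ^ 2) ≤ 1 + y := by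
  obtain ⟨h1, h2⟩ := abs_le.1 hy
  have hpos : 0 < 1 + y := by linarith
  have key : 1 ≤ (1 + y) * Real.exp (y ^ 2 - y) := by
    rcases le_total 0 y with h | h
    · have := Real.add_one_le_exp (y ^ 2 - y)
      nlinarith [pow_nonneg h 3, mul_le_mul_of_nonneg_left this hpos.le]
    · have := Real.quadratic_le_exp_of_nonneg (x := y ^ 2 - y) (by nlinarith)
      have h3 : 0 ≤ (1 + y) * (1 - y) ^ 2 + 2 * y := by nlinarith [sq_nonneg (y + 1 / 2)]
      nlinarith [mul_le_mul_of_nonneg_left this hpos.le, mul_nonneg (sq_nonneg y) h3]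
  have hmul : Real.exp (y - y ^ 2) * Real.exp (y ^ 2 - y) = 1 := by
    rw [← Real.exp_add]; simp
  have hE := Real.exp_pos (y - y ^ 2)
  calc Real.exp (y - y ^ 2) = Real.exp (y - y ^ 2) * 1 := by ring
    _ ≤ Real.exp (y - y ^ 2) * ((1 + y) * Real.exp (y ^ 2 - y)) := by gcongr
    _ = (1 + y) * (Real.exp (y - y ^ 2) * Real.exp (y ^ 2 - y)) := by ring
    _ = 1 + y := by rw [hmul, mul_one]

/-- Increment of the self-normalised log-moment process for the centred variable `V - pV`. -/
def selfNorm (l : ℝ) (p V : 𝒮 → ℝ) (t : 𝒮) : ℝ :=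
  l * (V t - Pexp p V) - (l * (V t - Pexp p V)) ^ 2

lemma Pexp_nonneg {p V : 𝒮 → ℝ} (hp : p ∈ stdSimplex ℝ 𝒮) (hV : ∀ s, 0 ≤ V s) :
    0 ≤ Pexp p V :=
  Finset.sum_nonneg fun s _ => mul_nonneg (hp.1 s) (hV s)

lemma Pexp_mono {p V W : 𝒮 → ℝ} (hp : p ∈ stdSimplex ℝ 𝒮) (h : ∀ s, V s ≤ W s) :
    Pexp p V ≤ Pexp p W :=
  Finset.sum_le_sum fun s _ => mul_le_mul_of_nonneg_left (h s) (hp.1 s)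

lemma Pexp_const {p : 𝒮 → ℝ} (hp : p ∈ stdSimplex ℝ 𝒮) (c : ℝ) : Pexp p (fun _ => c) = c := by
  simp [Pexp, ← Finset.sum_mul, hp.2]

lemma Pexp_add (p V W : 𝒮 → ℝ) : Pexp p (fun s => V s + W s) = Pexp p V + Pexp p W := by
  simp [Pexp, mul_add, Finset.sum_add_distrib]

lemma Pexp_sub (p V W : 𝒮 → ℝ) : Pexp p (fun s => V s - W s) = Pexp p V - Pexp p W := by
  simp [Pexp, mul_sub, Finset.sum_sub_distrib]

lemma Pexp_smul (p : 𝒮 → ℝ) (c : ℝ) (V : 𝒮 → ℝ) :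
    Pexp p (fun s => c * V s) = c * Pexp p V := by
  simp only [Pexp, Finset.mul_sum]
  exact Finset.sum_congr rfl fun s _ => by ring

lemma Pexp_le {p V : 𝒮 → ℝ} (hp : p ∈ stdSimplex ℝ 𝒮) {c : ℝ} (h : ∀ s, V s ≤ c) :
    Pexp p V ≤ c :=
  (Pexp_mono hp h).trans_eq (Pexp_const hp c)

lemma le_Pexp {p V : 𝒮 → ℝ} (hp : p ∈ stdSimplex ℝ 𝒮) {c : ℝ} (h : ∀ s, c ≤ V s) :
    c ≤ Pexp p V :=
  (Pexp_const hp c).symm.trans_le (Pexp_mono hp h)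

lemma Pexp_exp_selfNorm_le_one {p V : 𝒮 → ℝ} {H l : ℝ} (hp : p ∈ stdSimplex ℝ 𝒮)
    (hV : ∀ s, V s ∈ Set.Icc 0 H) (hl : 0 ≤ l) (hlH : l * H ≤ 1 / 2) :
    Pexp p (fun t => Real.exp (selfNorm l p V t)) ≤ 1 := by
  have h0 : 0 ≤ Pexp p V := le_Pexp hp fun s => (hV s).1
  have h1 : Pexp p V ≤ H := Pexp_le hp fun s => (hV s).2
  calc Pexp p (fun t => Real.exp (selfNorm l p V t))
      ≤ Pexp p (fun t => 1 + l * (V t - Pexp p V)) := by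
        refine Pexp_mono hp fun t => exp_sub_sq_le_one_add ?_
        obtain ⟨h2, h3⟩ := hV t
        rw [abs_le]; constructor <;> nlinarith
    _ = 1 := by
        rw [Pexp_add p (fun _ => 1), Pexp_const hp, Pexp_smul, Pexp_sub p V (fun _ => _),
          Pexp_const hp]
        ring

/-! ### Independence of the next states -/

lemma sum_pi_prod_mul_le_one [Nonempty 𝒮] {N : ℕ} (p : Fin N → 𝒮 → ℝ)
    (hp : ∀ m, p m ∈ stdSimplex ℝ 𝒮) (I : Fin N → Prop) [DecidablePred I]
    (h : (Fin N → 𝒮) → 𝒮 → ℝ) (hpos : ∀ y t, 0 ≤ h y t)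
    (hloc : ∀ y y', (∀ m, ¬ I m → y m = y' m) → h y = h y')
    (hmgf : ∀ y m, I m → Pexp (p m) (h y) ≤ 1) :
    ∑ y : Fin N → 𝒮, (∏ m, p m (y m)) * ∏ m, (if I m then h y (y m) else 1) ≤ 1 := by
  let e := Equiv.piEquivPiSubtypeProd I (fun _ : Fin N => 𝒮)
  rw [← Equiv.sum_comp e.symm, Fintype.sum_prod_type_right]
  let c : {m // I m} → 𝒮 := fun _ => Classical.arbitrary 𝒮
  have hterm : ∀ (y₂ : {m // ¬ I m} → 𝒮) (y₁ : {m // I m} → 𝒮),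
      (∏ m, p m (e.symm (y₁, y₂) m)) *
        ∏ m, (if I m then h (e.symm (y₁, y₂)) (e.symm (y₁, y₂) m) else 1) =
      (∏ m : {m // ¬ I m}, p m (y₂ m)) *
        ∏ m : {m // I m}, p m (y₁ m) * h (e.symm (c, y₂)) (y₁ m) := by
    intro y₂ y₁
    have hh : h (e.symm (y₁, y₂)) = h (e.symm (c, y₂)) :=
      hloc _ _ fun m hm => by simp [e, Equiv.piEquivPiSubtypeProd, hm]
    rw [hh, ← Finset.prod_mul_distrib, ← Fintype.prod_subtype_mul_prod_subtype I, mul_comm]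
    congr 1
    · exact Finset.prod_congr rfl fun m _ => by
        simp [e, Equiv.piEquivPiSubtypeProd, m.2]
    · exact Finset.prod_congr rfl fun m _ => by
        simp [e, Equiv.piEquivPiSubtypeProd, m.2]
  have hsum : ∀ y₂ : {m // ¬ I m} → 𝒮,
      ∑ y₁ : {m // I m} → 𝒮, (∏ m, p m (e.symm (y₁, y₂) m)) *
        ∏ m, (if I m then h (e.symm (y₁, y₂)) (e.symm (y₁, y₂) m) else 1) ≤
      ∏ m : {m // ¬ I m}, p m (y₂ m) := by
    intro y₂
    rw [Finset.sum_congr rfl fun y₁ _ => hterm y₂ y₁, ← Finset.mul_sum]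
    have hprod : ∑ y₁ : {m // I m} → 𝒮,
        ∏ m : {m // I m}, p m (y₁ m) * h (e.symm (c, y₂)) (y₁ m) =
        ∏ m : {m // I m}, Pexp (p m) (h (e.symm (c, y₂))) := by
      simp only [Pexp]
      rw [Finset.prod_univ_sum, Fintype.piFinset_univ]
    rw [hprod]
    refine mul_le_of_le_one_right (Finset.prod_nonneg fun m _ => (hp m).1 _) ?_
    exact Finset.prod_le_one (fun m _ => Pexp_nonneg (hp m) (hpos _)) fun m _ => hmgf _ m m.2
  refine (Finset.sum_le_sum fun y₂ _ => hsum y₂).trans_eq ?_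
  have hone := Finset.prod_univ_sum (fun _ : {m // ¬ I m} => (Finset.univ : Finset 𝒮))
    (fun m t => p m t)
  rw [Fintype.piFinset_univ] at hone
  rw [← hone]
  exact Finset.prod_eq_one fun m _ => (hp m).2

/-- The dataset with state-action triples `x` and next states `y`. -/
def mkData {N : ℕ} (x : Fin N → 𝒮 × 𝒜 × ℬ) (y : Fin N → 𝒮) : Fin N → 𝒮 × 𝒜 × ℬ × 𝒮 :=
  fun i => ((x i).1, (x i).2.1, (x i).2.2, y i)

/-- Datasets are pairs of triple sequences and next-state sequences. -/
def dataEquiv (N : ℕ) : (Fin N → 𝒮 × 𝒜 × ℬ) × (Fin N → 𝒮) ≃ (Fin N → 𝒮 × 𝒜 × ℬ × 𝒮) where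
  toFun q := mkData q.1 q.2
  invFun D := (fun i => ((D i).1, (D i).2.1, (D i).2.2.1), fun i => (D i).2.2.2)
  left_inv _ := rfl
  right_inv _ := rfl

lemma sum_dsWeight_mul {N : ℕ} (d : 𝒮 → 𝒜 → ℬ → ℝ) (P : 𝒮 → 𝒜 → ℬ → 𝒮 → ℝ)
    (g : (Fin N → 𝒮 × 𝒜 × ℬ × 𝒮) → ℝ) :
    ∑ D, dsWeight d P D * g D =
      ∑ x : Fin N → 𝒮 × 𝒜 × ℬ, (∏ i, d (x i).1 (x i).2.1 (x i).2.2) *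
        ∑ y : Fin N → 𝒮, (∏ i, P (x i).1 (x i).2.1 (x i).2.2 (y i)) * g (mkData x y) := by
  rw [← Equiv.sum_comp (dataEquiv N), Fintype.sum_prod_type]
  refine Finset.sum_congr rfl fun x _ => ?_
  rw [Finset.mul_sum]
  refine Finset.sum_congr rfl fun y _ => ?_
  change dsWeight d P (mkData x y) * g (mkData x y) = _
  simp [dsWeight, mkData, Finset.prod_mul_distrib, mul_assoc]

lemma sum_pi_prod_eq_one {X : Type} [Fintype X] {N : ℕ} (p : Fin N → X → ℝ)
    (hp : ∀ m, ∑ t, p m t = 1) : ∑ y : Fin N → X, ∏ m, p m (y m) = 1 := by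
  have hone := Finset.prod_univ_sum (fun _ : Fin N => (Finset.univ : Finset X)) p
  rw [Fintype.piFinset_univ] at hone
  rw [← hone]
  exact Finset.prod_eq_one fun m _ => hp m

lemma dsWeight_nonneg {N : ℕ} {d : 𝒮 → 𝒜 → ℬ → ℝ} {P : 𝒮 → 𝒜 → ℬ → 𝒮 → ℝ}
    (hd : IsDist3 d) (hP : IsKernel P) (D : Fin N → 𝒮 × 𝒜 × ℬ × 𝒮) : 0 ≤ dsWeight d P D :=
  Finset.prod_nonneg fun _ _ => mul_nonneg (hd.1 _ _ _) ((hP _ _ _).1 _)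

lemma sum_prod_dist_eq_one {N : ℕ} {d : 𝒮 → 𝒜 → ℬ → ℝ} (hd : IsDist3 d) :
    ∑ x : Fin N → 𝒮 × 𝒜 × ℬ, ∏ i, d (x i).1 (x i).2.1 (x i).2.2 = 1 :=
  sum_pi_prod_eq_one (fun _ (k : 𝒮 × 𝒜 × ℬ) => d k.1 k.2.1 k.2.2) fun _ => by
    simpa only [Fintype.sum_prod_type] using hd.2

lemma sum_dsWeight {N : ℕ} {d : 𝒮 → 𝒜 → ℬ → ℝ} {P : 𝒮 → 𝒜 → ℬ → 𝒮 → ℝ}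
    (hd : IsDist3 d) (hP : IsKernel P) :
    ∑ D : Fin N → 𝒮 × 𝒜 × ℬ × 𝒮, dsWeight d P D = 1 := by
  have := sum_dsWeight_mul (N := N) d P (fun _ => 1)
  simp only [mul_one] at this
  rw [this, ← sum_prod_dist_eq_one (N := N) hd]
  refine Finset.sum_congr rfl fun x _ => ?_
  rw [sum_pi_prod_eq_one _ fun m => (hP _ _ _).2, mul_one]

lemma dsProb_inter {N : ℕ} {d : 𝒮 → 𝒜 → ℬ → ℝ} {P : 𝒮 → 𝒜 → ℬ → 𝒮 → ℝ}
    (hd : IsDist3 d) (hP : IsKernel P) {E F : Set (Fin N → 𝒮 × 𝒜 × ℬ × 𝒮)} :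
    dsProb d P E + dsProb d P F - 1 ≤ dsProb d P (E ∩ F) := by
  rw [← sum_dsWeight (N := N) hd hP]
  unfold dsProb
  rw [← Finset.sum_add_distrib, ← Finset.sum_sub_distrib]
  refine Finset.sum_le_sum fun D _ => ?_
  have := dsWeight_nonneg hd hP D
  by_cases h1 : D ∈ E <;> by_cases h2 : D ∈ F <;> simp [Set.indicator, h1, h2, this]

lemma dsProb_mono {N : ℕ} {d : 𝒮 → 𝒜 → ℬ → ℝ} {P : 𝒮 → 𝒜 → ℬ → 𝒮 → ℝ}
    (hd : IsDist3 d) (hP : IsKernel P) {E F : Set (Fin N → 𝒮 × 𝒜 × ℬ × 𝒮)} (h : E ⊆ F) :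
    dsProb d P E ≤ dsProb d P F :=
  Finset.sum_le_sum fun D _ =>
    Set.indicator_le_indicator_of_subset h (fun D => dsWeight_nonneg hd hP D) D

variable [DecidableEq 𝒮] [DecidableEq 𝒜] [DecidableEq ℬ]

/-- Total of `g` over the next states observed at the triple `k`. -/
def rowSum {N : ℕ} (D : Fin N → 𝒮 × 𝒜 × ℬ × 𝒮) (k : 𝒮 × 𝒜 × ℬ) (g : 𝒮 → ℝ) : ℝ :=
  ∑ m, if (D m).1 = k.1 ∧ (D m).2.1 = k.2.1 ∧ (D m).2.2.1 = k.2.2 then g (D m).2.2.2 else 0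

lemma sum_cnt {N : ℕ} (D : Fin N → 𝒮 × 𝒜 × ℬ × 𝒮) :
    ∑ k : 𝒮 × 𝒜 × ℬ, cnt D k.1 k.2.1 k.2.2 = N := by
  simp only [cnt, Finset.card_filter]
  rw [Finset.sum_comm]
  have : ∀ m : Fin N, (∑ k : 𝒮 × 𝒜 × ℬ,
      if (D m).1 = k.1 ∧ (D m).2.1 = k.2.1 ∧ (D m).2.2.1 = k.2.2 then 1 else 0) = 1 := by
    intro m
    rw [Finset.sum_eq_single ((D m).1, (D m).2.1, (D m).2.2.1)]
    · simp
    · rintro ⟨s, a, b⟩ _ hne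
      rw [if_neg]
      rintro ⟨rfl, rfl, rfl⟩
      exact hne rfl
    · simp
  simp [this]

lemma sum_indicator_cnt_le {N : ℕ} (D : Fin N → 𝒮 × 𝒜 × ℬ × 𝒮) :
    ∑ k : 𝒮 × 𝒜 × ℬ, (if cnt D k.1 k.2.1 k.2.2 ≠ 0 then (1 : ℝ) else 0) ≤ N := by
  calc _ ≤ ∑ k : 𝒮 × 𝒜 × ℬ, (cnt D k.1 k.2.1 k.2.2 : ℝ) := by
        refine Finset.sum_le_sum fun k _ => ?_
        split_ifs with h
        · exact_mod_cast Nat.one_le_iff_ne_zero.2 h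
        · positivity
    _ = N := by exact_mod_cast sum_cnt D

lemma one_sub_le_dsProb {N : ℕ} [Nonempty 𝒮] {d : 𝒮 → 𝒜 → ℬ → ℝ}
    {P : 𝒮 → 𝒜 → ℬ → 𝒮 → ℝ} (hd : IsDist3 d) (hP : IsKernel P)
    {ι : Type} [Fintype ι] (L : ℝ)
    (g : ι → (Fin N → 𝒮 × 𝒜 × ℬ × 𝒮) → 𝒮 × 𝒜 × ℬ → 𝒮 → ℝ)
    (hloc : ∀ i x y y' k, (∀ m, x m ≠ k → y m = y' m) →
      g i (mkData x y) k = g i (mkData x y') k)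
    (hmgf : ∀ i D k, Pexp (P k.1 k.2.1 k.2.2) (fun t => Real.exp (g i D k t)) ≤ 1) :
    1 - N * Fintype.card ι * Real.exp (-L) ≤
      dsProb d P {D : Fin N → 𝒮 × 𝒜 × ℬ × 𝒮 |
        ∀ k : 𝒮 × 𝒜 × ℬ, cnt D k.1 k.2.1 k.2.2 ≠ 0 → ∀ i, rowSum D k (g i D k) ≤ L} := by
  set E : Set (Fin N → 𝒮 × 𝒜 × ℬ × 𝒮) := {D |
        ∀ k : 𝒮 × 𝒜 × ℬ, cnt D k.1 k.2.1 k.2.2 ≠ 0 → ∀ i, rowSum D k (g i D k) ≤ L} with hE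
  let G : (Fin N → 𝒮 × 𝒜 × ℬ × 𝒮) → ℝ := fun D => ∑ k : 𝒮 × 𝒜 × ℬ, ∑ i,
    (if cnt D k.1 k.2.1 k.2.2 ≠ 0 then (1 : ℝ) else 0) *
      (Real.exp (-L) * Real.exp (rowSum D k (g i D k)))
  have hGt : ∀ D k i, 0 ≤ (if cnt D k.1 k.2.1 k.2.2 ≠ 0 then (1 : ℝ) else 0) *
      (Real.exp (-L) * Real.exp (rowSum D k (g i D k))) := by
    intro D k i
    split_ifs <;> positivity
  have hpt : ∀ D, dsWeight d P D - dsWeight d P D * G D ≤ E.indicator (dsWeight d P) D := by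
    intro D
    have hw := dsWeight_nonneg hd hP D
    have hG0 : 0 ≤ G D := Finset.sum_nonneg fun k _ => Finset.sum_nonneg fun i _ => hGt D k i
    by_cases hD : D ∈ E
    · rw [Set.indicator_of_mem hD]
      nlinarith
    · rw [Set.indicator_of_notMem hD]
      have : 1 ≤ G D := by
        simp only [hE, Set.mem_ofPred_eq, not_forall, not_le] at hD
        obtain ⟨k, hk, i, hi⟩ := hD
        have h1 : (1 : ℝ) ≤ (if cnt D k.1 k.2.1 k.2.2 ≠ 0 then (1 : ℝ) else 0) *
            (Real.exp (-L) * Real.exp (rowSum D k (g i D k))) := by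
          rw [if_pos hk, one_mul, ← Real.exp_add]
          exact Real.one_le_exp (by linarith)
        refine h1.trans ?_
        refine (Finset.single_le_sum (f := fun i => (if cnt D k.1 k.2.1 k.2.2 ≠ 0 then (1 : ℝ)
          else 0) * (Real.exp (-L) * Real.exp (rowSum D k (g i D k))))
          (fun i _ => hGt D k i) (Finset.mem_univ i)).trans ?_
        exact Finset.single_le_sum (f := fun k => ∑ i, (if cnt D k.1 k.2.1 k.2.2 ≠ 0 then (1 : ℝ)
          else 0) * (Real.exp (-L) * Real.exp (rowSum D k (g i D k))))
          (fun k _ => Finset.sum_nonneg fun i _ => hGt D k i) (Finset.mem_univ k)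
      nlinarith
  have hEG : ∑ D, dsWeight d P D * G D ≤ N * Fintype.card ι * Real.exp (-L) := by
    rw [sum_dsWeight_mul]
    have hx : ∀ x : Fin N → 𝒮 × 𝒜 × ℬ,
        ∑ y : Fin N → 𝒮, (∏ i, P (x i).1 (x i).2.1 (x i).2.2 (y i)) * G (mkData x y) ≤
          N * Fintype.card ι * Real.exp (-L) := by
      intro x
      let c : 𝒮 × 𝒜 × ℬ → ℝ := fun k =>
        if cnt (mkData x fun _ => Classical.arbitrary 𝒮) k.1 k.2.1 k.2.2 ≠ 0 then (1 : ℝ) else 0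
      have hc0 : ∀ k, 0 ≤ c k := fun k => by simp only [c]; split_ifs <;> norm_num
      have hinner : ∀ k i, ∑ y : Fin N → 𝒮, (∏ i, P (x i).1 (x i).2.1 (x i).2.2 (y i)) *
          Real.exp (rowSum (mkData x y) k (g i (mkData x y) k)) ≤ 1 := by
        intro k i
        have := sum_pi_prod_mul_le_one (fun m => P (x m).1 (x m).2.1 (x m).2.2)
          (fun m => hP _ _ _) (fun m => (x m).1 = k.1 ∧ (x m).2.1 = k.2.1 ∧ (x m).2.2 = k.2.2)
          (fun y t => Real.exp (g i (mkData x y) k t)) (fun _ _ => (Real.exp_pos _).le)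
          (fun y y' h => by
            rw [hloc i x y y' k fun m hm => h m fun h' => hm ?_]
            exact Prod.ext h'.1 (Prod.ext h'.2.1 h'.2.2))
          (fun y m h => by
            rw [h.1, h.2.1, h.2.2]
            exact hmgf i _ k)
        refine le_trans (le_of_eq (Finset.sum_congr rfl fun y _ => ?_)) this
        rw [rowSum, Real.exp_sum]
        congr 1
        refine Finset.prod_congr rfl fun m _ => ?_
        change Real.exp (if (x m).1 = k.1 ∧ (x m).2.1 = k.2.1 ∧ (x m).2.2 = k.2.2 then
          g i (mkData x y) k (y m) else 0) = _
        by_cases h : (x m).1 = k.1 ∧ (x m).2.1 = k.2.1 ∧ (x m).2.2 = k.2.2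
        · rw [if_pos h, if_pos h]
        · rw [if_neg h, if_neg h, Real.exp_zero]
      have hrew : ∑ y : Fin N → 𝒮, (∏ i, P (x i).1 (x i).2.1 (x i).2.2 (y i)) * G (mkData x y) =
          ∑ k, ∑ i, c k * (Real.exp (-L) * ∑ y : Fin N → 𝒮,
            (∏ i, P (x i).1 (x i).2.1 (x i).2.2 (y i)) *
              Real.exp (rowSum (mkData x y) k (g i (mkData x y) k))) := by
        simp only [G, Finset.mul_sum]
        rw [Finset.sum_comm]
        refine Finset.sum_congr rfl fun k _ => ?_
        rw [Finset.sum_comm]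
        refine Finset.sum_congr rfl fun i _ => Finset.sum_congr rfl fun y _ => ?_
        have : cnt (mkData x y) k.1 k.2.1 k.2.2 =
          cnt (mkData x fun _ => Classical.arbitrary 𝒮) k.1 k.2.1 k.2.2 := rfl
        rw [this]
        simp only [c]
        ring
      rw [hrew]
      calc _ ≤ ∑ k : 𝒮 × 𝒜 × ℬ, ∑ _i : ι, c k * Real.exp (-L) := by
            refine Finset.sum_le_sum fun k _ => Finset.sum_le_sum fun i _ => ?_
            exact mul_le_mul_of_nonneg_left
              (mul_le_of_le_one_right (Real.exp_pos _).le (hinner k i)) (hc0 k)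
        _ = (∑ k, c k) * (Fintype.card ι * Real.exp (-L)) := by
            rw [Finset.sum_mul]
            refine Finset.sum_congr rfl fun k _ => ?_
            rw [Finset.sum_const, Finset.card_univ, nsmul_eq_mul]
            ring
        _ ≤ N * (Fintype.card ι * Real.exp (-L)) :=
            mul_le_mul_of_nonneg_right (sum_indicator_cnt_le _) (by positivity)
        _ = _ := by ring
    calc _ ≤ ∑ x : Fin N → 𝒮 × 𝒜 × ℬ, (∏ i, d (x i).1 (x i).2.1 (x i).2.2) *
          (N * Fintype.card ι * Real.exp (-L)) :=
          Finset.sum_le_sum fun x _ => mul_le_mul_of_nonneg_left (hx x)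
            (Finset.prod_nonneg fun _ _ => hd.1 _ _ _)
      _ = _ := by rw [← Finset.sum_mul, sum_prod_dist_eq_one hd, one_mul]
  have hsum := Finset.sum_le_sum fun D (_ : D ∈ Finset.univ) => hpt D
  rw [Finset.sum_sub_distrib, sum_dsWeight hd hP] at hsum
  unfold dsProb
  linarith

end ZSMG

namespace ZSMG

variable {𝒮 𝒜 ℬ : Type} [Fintype 𝒮]

/-! ### Variances and the empirical Bernstein inequality -/

lemma varP_eq {p : 𝒮 → ℝ} (hp : p ∈ stdSimplex ℝ 𝒮) (V : 𝒮 → ℝ) (c : ℝ) :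
    Pexp p (fun s => (V s - c) ^ 2) = varP p V + (Pexp p V - c) ^ 2 := by
  have h : (fun s => (V s - c) ^ 2) = fun s => (V s * V s - (2 * c) * V s) + c ^ 2 := by
    funext s; ring
  rw [h, Pexp_add p _ (fun _ => c ^ 2), Pexp_sub, Pexp_smul, Pexp_const hp, varP]
  ring

lemma varP_nonneg {p : 𝒮 → ℝ} (hp : p ∈ stdSimplex ℝ 𝒮) (V : 𝒮 → ℝ) : 0 ≤ varP p V := by
  have h := varP_eq hp V (Pexp p V)
  have h2 := Pexp_nonneg hp fun s => sq_nonneg (V s - Pexp p V)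
  rw [h] at h2
  simpa using h2

lemma varP_le_sq {p V : 𝒮 → ℝ} (hp : p ∈ stdSimplex ℝ 𝒮) {H : ℝ} (hV : ∀ s, |V s| ≤ H) :
    varP p V ≤ H ^ 2 := by
  have h : Pexp p (fun s => V s * V s) ≤ H ^ 2 := Pexp_le hp fun s => by
    rw [← sq, ← sq_abs]
    exact pow_le_pow_left₀ (abs_nonneg _) (hV s) 2
  unfold varP
  nlinarith [sq_nonneg (Pexp p V)]

lemma varP_sub (p V W : 𝒮 → ℝ) : varP p (fun s => V s - W s) =
    varP p V + varP p W - 2 * (Pexp p (fun s => V s * W s) - Pexp p V * Pexp p W) := by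
  have h : (fun s => (V s - W s) * (V s - W s)) =
      fun s => (V s * V s + W s * W s) - 2 * (V s * W s) := by
    funext s; ring
  simp only [varP]
  rw [h, Pexp_sub p (fun s => V s * V s + W s * W s), Pexp_add, Pexp_smul, Pexp_sub]
  ring

lemma varP_add_const {p : 𝒮 → ℝ} (hp : p ∈ stdSimplex ℝ 𝒮) (V : 𝒮 → ℝ) (c : ℝ) :
    varP p (fun s => V s + c) = varP p V := by
  have h := varP_eq hp (fun s => V s + c) c
  simp only [add_sub_cancel_right] at h
  have h2 := varP_eq hp V 0
  rw [Pexp_add p V (fun _ => c), Pexp_const hp] at h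
  simp only [sub_zero] at h2
  linarith

lemma varP_const_sub {p : 𝒮 → ℝ} (hp : p ∈ stdSimplex ℝ 𝒮) (V : 𝒮 → ℝ) (c : ℝ) :
    varP p (fun s => c - V s) = varP p V := by
  have h := varP_eq hp (fun s => c - V s) c
  have h2 := varP_eq hp V 0
  rw [Pexp_sub p (fun _ => c) V, Pexp_const hp] at h
  have h3 : (fun s => (c - V s - c) ^ 2) = fun s => (V s - 0) ^ 2 := by funext s; ring
  rw [h3] at h
  nlinarith

lemma varP_le_two_mul_add {p V W : 𝒮 → ℝ} (hp : p ∈ stdSimplex ℝ 𝒮) {η : ℝ}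
    (h : ∀ s, |V s - W s| ≤ η) : varP p V ≤ 2 * varP p W + 2 * η ^ 2 := by
  have h1 := varP_le_sq hp h
  have h2 := varP_nonneg hp (fun s => (V s - W s) - W s)
  rw [varP_sub p (fun s => V s - W s) W] at h2
  have h3 := varP_sub p (fun s => V s - W s) (fun s => 0 - W s)
  have h4 : varP p (fun s => (V s - W s) - (0 - W s)) = varP p V := by
    congr 1; funext s; ring
  have h5 : (fun s => (V s - W s) * (0 - W s)) = fun s => (-1) * ((V s - W s) * W s) := by
    funext s; ring
  rw [h4, varP_const_sub hp, h5, Pexp_smul, Pexp_sub p (fun _ => 0) W, Pexp_const hp] at h3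
  nlinarith

lemma varP_sub_varP_le {p V V' : 𝒮 → ℝ} (hp : p ∈ stdSimplex ℝ 𝒮) {H : ℝ}
    (hle : ∀ s, V s ≤ V' s) (hosc : ∀ s t, V' s - V' t ≤ H) :
    varP p V' - varP p V ≤ 2 * H * (Pexp p V' - Pexp p V) := by
  have h1 : Pexp p (fun s => (V' s - Pexp p V') * (V' s - V s)) ≤
      Pexp p (fun s => H * (V' s - V s)) := by
    refine Pexp_mono hp fun s => mul_le_mul_of_nonneg_right ?_ (sub_nonneg.2 (hle s))
    have := le_Pexp (V := V') hp (c := V' s - H) fun t => by linarith [hosc s t]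
    linarith
  have h2 : (fun s => (V' s - Pexp p V') * (V' s - V s)) =
      fun s => (V' s * V' s - V' s * V s) - Pexp p V' * (V' s - V s) := by
    funext s; ring
  rw [h2, Pexp_smul, Pexp_sub p (fun s => V' s * V' s - V' s * V s), Pexp_sub, Pexp_smul,
    Pexp_sub] at h1
  have h3 := varP_nonneg hp (fun s => V' s - V s)
  rw [varP_sub] at h3
  have h4 : varP p V' = Pexp p (fun s => V' s * V' s) - (Pexp p V') ^ 2 := rfl
  nlinarith

lemma Pexp_selfNorm {p : 𝒮 → ℝ} (hp : p ∈ stdSimplex ℝ 𝒮) (q V : 𝒮 → ℝ) (l : ℝ) :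
    Pexp p (selfNorm l q V) = l * (Pexp p V - Pexp q V) -
      l ^ 2 * (varP p V + (Pexp p V - Pexp q V) ^ 2) := by
  have h : selfNorm l q V = fun s => l * (V s - Pexp q V) - l ^ 2 * (V s - Pexp q V) ^ 2 := by
    funext s; simp only [selfNorm]; ring
  rw [h, Pexp_sub p, Pexp_smul, Pexp_smul, Pexp_sub p V (fun _ => _), Pexp_const hp, varP_eq hp]

lemma empirical_bernstein {p q V : 𝒮 → ℝ} (hp : p ∈ stdSimplex ℝ 𝒮)
    (hq : q ∈ stdSimplex ℝ 𝒮) {H L : ℝ} {n N : ℕ} (hn : n ≠ 0) (hnN : n ≤ N) (hH : 0 < H)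
    (hL : 1 / 4 ≤ L) (hV : ∀ s, V s ∈ Set.Icc 0 H)
    (hdev : ∀ j : ℕ, 1 ≤ j → j ≤ N → n * Pexp p (selfNorm (1 / (2 * H * j)) q V) ≤ L) :
    Pexp p V - Pexp q V ≤ max (6 * √(L * varP p V / n)) (8 * H * L / n) := by
  have hn0 : (0 : ℝ) < n := by exact_mod_cast Nat.pos_of_ne_zero hn
  have hn1 : (1 : ℝ) ≤ n := by exact_mod_cast Nat.one_le_iff_ne_zero.2 hn
  have hL0 : 0 < L := by linarith
  set x := Pexp p V - Pexp q V with hx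
  set σ := varP p V with hσ
  have hσ0 : 0 ≤ σ := varP_nonneg hp V
  have hσH : σ ≤ H ^ 2 := varP_le_sq hp fun s => by rw [abs_of_nonneg (hV s).1]; exact (hV s).2
  have hxH : x ≤ H := by
    have h1 := Pexp_le hp fun s => (hV s).2
    have h2 := le_Pexp hq fun s => (hV s).1
    linarith
  rcases le_or_gt x 0 with hx0 | hx0
  · exact hx0.trans (le_max_of_le_left (by positivity))
  have hbound : ∀ j : ℕ, 1 ≤ j → j ≤ N → x ≤ 4 * H * j * L / n + σ / (H * j) := by
    intro j hj1 hjN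
    have hj : (1 : ℝ) ≤ j := by exact_mod_cast hj1
    have hj0 : (0 : ℝ) < j := by linarith
    have h := hdev j hj1 hjN
    rw [Pexp_selfNorm hp, ← hx, ← hσ] at h
    set l := 1 / (2 * H * j) with hl
    have hl0 : 0 < l := by positivity
    have hlx : l * x ≤ 1 / 2 := by
      rw [hl, div_mul_eq_mul_div, one_mul, div_le_div_iff₀ (by positivity) (by norm_num)]
      nlinarith
    have h1 : n * (l * x / 2) ≤ L + n * (l ^ 2 * σ) := by
      have : l ^ 2 * x ^ 2 ≤ l * x / 2 := by nlinarith [mul_pos hl0 hx0]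
      nlinarith
    have h2 : 4 * H * j * L / n + σ / (H * j) = 2 * (L + n * (l ^ 2 * σ)) / (n * l) := by
      rw [hl]; field_simp; ring
    rw [h2, le_div_iff₀ (by positivity)]
    nlinarith
  rcases le_or_gt (n * σ) (4 * H ^ 2 * L) with hc | hc
  · refine le_max_of_le_right ?_
    have h := hbound 1 le_rfl ((Nat.one_le_iff_ne_zero.2 hn).trans hnN)
    have h1 : σ / H ≤ 4 * H * L / n := by
      rw [div_le_div_iff₀ hH hn0]; nlinarith
    simp only [Nat.cast_one, mul_one] at h
    calc x ≤ 4 * H * L / n + 4 * H * L / n := by linarith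
      _ = 8 * H * L / n := by ring
  · refine le_max_of_le_left ?_
    set R := √(L * σ / n) with hR
    have hR2 : R ^ 2 = L * σ / n := Real.sq_sqrt (by positivity)
    have hRlow : 2 * H * L / n < R := by
      refine Real.lt_sqrt_of_sq_lt ?_
      rw [div_pow, div_lt_div_iff₀ (by positivity) hn0]
      nlinarith [mul_pos (mul_pos hL0 hn0) (sub_pos.2 hc)]
    have hRup : R ≤ 2 * H * L := by
      refine Real.sqrt_le_iff.2 ⟨by positivity, ?_⟩
      rw [div_le_iff₀ hn0]
      have h1 : L * σ ≤ L * H ^ 2 := by gcongr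
      have h2 : L * H ^ 2 ≤ (2 * H * L) ^ 2 := by nlinarith [mul_pos hL0 (pow_pos hH 2)]
      nlinarith [mul_nonneg (sq_nonneg (2 * H * L)) (sub_nonneg.2 hn1)]
    have hR0 : 0 < R := lt_of_le_of_lt (by positivity) hRlow
    set ρ := n * R / (2 * H * L) with hρ
    have hρ1 : 1 < ρ := by
      rw [hρ, lt_div_iff₀ (by positivity)]
      rw [div_lt_iff₀ hn0] at hRlow
      linarith
    have hρn : ρ ≤ n := by
      rw [hρ, div_le_iff₀ (by positivity)]
      gcongr
    have hj1 : 1 ≤ ⌈ρ⌉₊ := Nat.one_le_ceil_iff.2 (by linarith)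
    have hjN : ⌈ρ⌉₊ ≤ N := (Nat.ceil_le.2 hρn).trans hnN
    have hjlow : ρ ≤ ⌈ρ⌉₊ := Nat.le_ceil ρ
    have hjup : (⌈ρ⌉₊ : ℝ) ≤ 2 * ρ := by
      have := Nat.ceil_lt_add_one (show 0 ≤ ρ by linarith)
      linarith
    have hρ0 : 0 < ρ := by linarith
    calc x ≤ 4 * H * ⌈ρ⌉₊ * L / n + σ / (H * ⌈ρ⌉₊) := hbound _ hj1 hjN
      _ ≤ 4 * H * (2 * ρ) * L / n + σ / (H * ρ) := by gcongr
      _ = 4 * R + 2 * (L * σ / n) / R := by rw [hρ]; field_simp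
      _ = 6 * R := by rw [← hR2]; field_simp; norm_num

/-! ### The penalty -/

lemma penalty_nonneg {γ δ Cb : ℝ} (hγ : γ < 1) (N n : ℕ) (p V : 𝒮 → ℝ) :
    0 ≤ penalty γ δ Cb N n p V := by
  have h : 0 < 1 / (1 - γ) := by
    have : 0 < 1 - γ := by linarith
    positivity
  unfold penalty
  refine add_nonneg ?_ (by positivity)
  split_ifs
  · exact h.le
  · exact le_min (le_max_of_le_left (Real.sqrt_nonneg _)) h.le

lemma penalty_congr {γ δ Cb : ℝ} {N n : ℕ} {p V W : 𝒮 → ℝ} (h : varP p V = varP p W) :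
    penalty γ δ Cb N n p V = penalty γ δ Cb N n p W := by
  simp only [penalty, h]

lemma le_penalty_zero {γ δ Cb : ℝ} (N : ℕ) (p V : 𝒮 → ℝ) :
    1 / (1 - γ) ≤ penalty γ δ Cb N 0 p V := by
  have : (0 : ℝ) ≤ 4 / N := by positivity
  simp only [penalty, if_true]
  linarith

lemma penalty_sub_penalty_le {γ δ Cb : ℝ} (hγ : γ < 1) {N n : ℕ} {p V V' : 𝒮 → ℝ}
    (hp : p ∈ stdSimplex ℝ 𝒮) (hC : n ≠ 0 → 0 < Cb * Real.log ((N : ℝ) / ((1 - γ) * δ)))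
    (hle : ∀ s, V s ≤ V' s) (hosc : ∀ s t, V' s - V' t ≤ 1 / (1 - γ)) :
    penalty γ δ Cb N n p V' - penalty γ δ Cb N n p V ≤ (Pexp p V' - Pexp p V) / 2 := by
  have hD : 0 ≤ Pexp p V' - Pexp p V := sub_nonneg.2 (Pexp_mono hp hle)
  unfold penalty
  rw [add_sub_add_right_eq_sub]
  split_ifs with hn
  · linarith
  have hγ' : 0 < 1 - γ := by linarith
  have hn0 : (0 : ℝ) < n := by exact_mod_cast Nat.pos_of_ne_zero hn
  replace hC := hC hn
  rw [mul_assoc 2 Cb]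
  set C := Cb * Real.log ((N : ℝ) / ((1 - γ) * δ))
  have hvar := varP_sub_varP_le hp hle hosc
  set H := 1 / (1 - γ) with hH
  have hH0 : 0 < H := by positivity
  have hm : 2 * C / ((1 - γ) * n) = 2 * C * H / n := by rw [hH]; field_simp
  rw [hm]
  set m := 2 * C * H / n with hmdef
  have hm0 : 0 < m := by positivity
  set a' := √(C * varP p V' / n) with ha'
  set a := √(C * varP p V / n) with ha
  have ha'2 : a' ^ 2 = C * varP p V' / n :=
    Real.sq_sqrt (div_nonneg (mul_nonneg hC.le (varP_nonneg hp V')) hn0.le)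
  have ha2 : a ^ 2 = C * varP p V / n :=
    Real.sq_sqrt (div_nonneg (mul_nonneg hC.le (varP_nonneg hp V)) hn0.le)
  have ha0 : 0 ≤ a := Real.sqrt_nonneg _
  have hsq : a' ^ 2 - a ^ 2 ≤ m * (Pexp p V' - Pexp p V) := by
    rw [ha'2, ha2, hmdef]
    calc C * varP p V' / n - C * varP p V / n = C / n * (varP p V' - varP p V) := by ring
      _ ≤ C / n * (2 * H * (Pexp p V' - Pexp p V)) := by gcongr
      _ = _ := by ring
  have hmax : max a' m - max a m ≤ (Pexp p V' - Pexp p V) / 2 := by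
    set D := Pexp p V' - Pexp p V
    rcases le_or_gt a' (max a m) with h | h
    · have := max_le h (le_max_right a m)
      linarith
    · have h1 : m < a' := (le_max_right a m).trans_lt h
      rw [max_eq_left h1.le]
      have h2 : m ≤ max a m := le_max_right a m
      have h3 : a ≤ max a m := le_max_left a m
      set M := max a m
      by_contra hcon
      push Not at hcon
      nlinarith [mul_pos hm0 (sub_pos.2 h), mul_nonneg (sub_nonneg.2 h.le) (sub_nonneg.2 h2)]
  have hmin : min (max a' m) H ≤ min (max a m) H + (Pexp p V' - Pexp p V) / 2 := by
    rw [← min_add_add_right]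
    exact min_le_min (by linarith) (by linarith)
  linarith

end ZSMG

namespace ZSMG

variable {𝒮 𝒜 ℬ : Type} [Fintype 𝒮]

/-! ### Pessimistic value iteration for an abstract matrix-game value -/

/-- Monotone, translation-equivariant functionals of payoff matrices. -/
structure IsValueMap (val : (𝒜 → ℬ → ℝ) → ℝ) : Prop where
  mono : ∀ M M', (∀ a b, M a b ≤ M' a b) → val M ≤ val M'
  shift : ∀ M c, val (fun a b => M a b + c) = val M + c
  zero : val (fun _ _ => 0) = 0

/-- The data of a pessimistic Bellman operator whose penalty is dominated by the transitions. -/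
structure IsPessimistic (γ : ℝ) (rh : 𝒮 → 𝒜 → ℬ → ℝ) (Ph : 𝒮 → 𝒜 → ℬ → 𝒮 → ℝ)
    (pen : 𝒮 → 𝒜 → ℬ → (𝒮 → ℝ) → ℝ) : Prop where
  reward : ∀ s a b, rh s a b ∈ Set.Icc (0 : ℝ) 1
  kernel : ∀ s a b, Ph s a b ∈ stdSimplex ℝ 𝒮
  nonneg : ∀ s a b V, 0 ≤ pen s a b V
  shift : ∀ s a b V c, pen s a b (fun t => V t + c) = pen s a b V
  mono : ∀ s a b V V', (∀ t, V t ≤ V' t) → (∀ t t', V' t - V' t' ≤ 1 / (1 - γ)) →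
    pen s a b V' - pen s a b V ≤ (Pexp (Ph s a b) V' - Pexp (Ph s a b) V) / 2

/-- The pessimistic Bellman operator, as a map from values to action values. -/
def bell (γ : ℝ) (rh : 𝒮 → 𝒜 → ℬ → ℝ) (Ph : 𝒮 → 𝒜 → ℬ → 𝒮 → ℝ)
    (pen : 𝒮 → 𝒜 → ℬ → (𝒮 → ℝ) → ℝ) (V : 𝒮 → ℝ) : 𝒮 → 𝒜 → ℬ → ℝ := fun s a b =>
  max (rh s a b + γ * Pexp (Ph s a b) V - pen s a b V) 0

/-- One step of pessimistic value iteration. -/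
def vstep (val : (𝒜 → ℬ → ℝ) → ℝ) (γ : ℝ) (rh : 𝒮 → 𝒜 → ℬ → ℝ)
    (Ph : 𝒮 → 𝒜 → ℬ → 𝒮 → ℝ) (pen : 𝒮 → 𝒜 → ℬ → (𝒮 → ℝ) → ℝ) (V : 𝒮 → ℝ) : 𝒮 → ℝ :=
  fun s => val (bell γ rh Ph pen V s)

variable {val : (𝒜 → ℬ → ℝ) → ℝ} {γ : ℝ} {rh : 𝒮 → 𝒜 → ℬ → ℝ}
  {Ph : 𝒮 → 𝒜 → ℬ → 𝒮 → ℝ} {pen : 𝒮 → 𝒜 → ℬ → (𝒮 → ℝ) → ℝ}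

lemma IsValueMap.mem_Icc (hval : IsValueMap val) {M : 𝒜 → ℬ → ℝ} {H : ℝ}
    (hM : ∀ a b, M a b ∈ Set.Icc 0 H) : val M ∈ Set.Icc 0 H := by
  have h0 := hval.mono (fun _ _ => 0) M fun a b => (hM a b).1
  have h1 := hval.mono M (fun _ _ => 0 + H) fun a b => by simpa using (hM a b).2
  rw [hval.shift (fun _ _ => 0) H, hval.zero, zero_add] at h1
  rw [hval.zero] at h0
  exact ⟨h0, h1⟩

lemma bell_mem_Icc (hγ : 1 / 2 ≤ γ) (hγ1 : γ < 1) (hp : IsPessimistic γ rh Ph pen) {V : 𝒮 → ℝ}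
    (hV : ∀ s, V s ∈ Set.Icc 0 (1 / (1 - γ))) (s : 𝒮) (a : 𝒜) (b : ℬ) :
    bell γ rh Ph pen V s a b ∈ Set.Icc 0 (1 / (1 - γ)) := by
  have h1 : 0 < 1 - γ := by linarith
  have h2 : 1 + γ * (1 / (1 - γ)) = 1 / (1 - γ) := by field_simp; ring
  refine ⟨le_max_right _ _, max_le ?_ (by positivity)⟩
  have h3 := Pexp_le (hp.kernel s a b) fun t => (hV t).2
  have h4 := (hp.reward s a b).2
  have h5 := hp.nonneg s a b V
  nlinarith

lemma bell_le_add (hγ : 1 / 2 ≤ γ) (hp : IsPessimistic γ rh Ph pen)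
    {V V' : 𝒮 → ℝ} {c : ℝ} (hc : 0 ≤ c) (hV' : ∀ s, V' s ∈ Set.Icc 0 (1 / (1 - γ)))
    (h : ∀ s, V s ≤ V' s + c) (s : 𝒮) (a : 𝒜) (b : ℬ) :
    bell γ rh Ph pen V s a b ≤ bell γ rh Ph pen V' s a b + γ * c := by
  have h1 := hp.mono s a b V (fun t => V' t + c) h fun t t' => by
    have := (hV' t).2
    have := (hV' t').1
    linarith
  have h2 := Pexp_mono (hp.kernel s a b) h
  rw [hp.shift, Pexp_add _ _ (fun _ => c), Pexp_const (hp.kernel s a b)] at h1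
  rw [Pexp_add _ _ (fun _ => c), Pexp_const (hp.kernel s a b)] at h2
  have h0 : 0 ≤ γ * c := mul_nonneg (by linarith) hc
  unfold bell
  refine max_le ?_ (add_nonneg (le_max_right _ _) h0)
  have h3 := le_max_left (rh s a b + γ * Pexp (Ph s a b) V' - pen s a b V') 0
  nlinarith

lemma vstep_mem_Icc (hval : IsValueMap val) (hγ : 1 / 2 ≤ γ) (hγ1 : γ < 1)
    (hp : IsPessimistic γ rh Ph pen) {V : 𝒮 → ℝ} (hV : ∀ s, V s ∈ Set.Icc 0 (1 / (1 - γ)))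
    (s : 𝒮) : vstep val γ rh Ph pen V s ∈ Set.Icc 0 (1 / (1 - γ)) :=
  hval.mem_Icc fun a b => bell_mem_Icc hγ hγ1 hp hV s a b

lemma vstep_le_add (hval : IsValueMap val) (hγ : 1 / 2 ≤ γ)
    (hp : IsPessimistic γ rh Ph pen) {V V' : 𝒮 → ℝ} {c : ℝ} (hc : 0 ≤ c)
    (hV' : ∀ s, V' s ∈ Set.Icc 0 (1 / (1 - γ))) (h : ∀ s, V s ≤ V' s + c) (s : 𝒮) :
    vstep val γ rh Ph pen V s ≤ vstep val γ rh Ph pen V' s + γ * c := by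
  unfold vstep
  rw [← hval.shift]
  exact hval.mono _ _ fun a b => bell_le_add hγ hp hc hV' h s a b

lemma iterate_vstep_mem_Icc (hval : IsValueMap val) (hγ : 1 / 2 ≤ γ) (hγ1 : γ < 1)
    (hp : IsPessimistic γ rh Ph pen) (t : ℕ) (s : 𝒮) :
    (vstep val γ rh Ph pen)^[t] (fun _ => 0) s ∈ Set.Icc 0 (1 / (1 - γ)) := by
  have h1 : 0 < 1 - γ := by linarith
  induction t generalizing s with
  | zero => exact ⟨le_rfl, by simp only [Function.iterate_zero, id]; positivity⟩
  | succ t ih =>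
    rw [Function.iterate_succ_apply']
    exact vstep_mem_Icc hval hγ hγ1 hp ih s

lemma iterate_vstep_le_succ (hval : IsValueMap val) (hγ : 1 / 2 ≤ γ) (hγ1 : γ < 1)
    (hp : IsPessimistic γ rh Ph pen) (t : ℕ) (s : 𝒮) :
    (vstep val γ rh Ph pen)^[t] (fun _ => 0) s ≤
      (vstep val γ rh Ph pen)^[t + 1] (fun _ => 0) s := by
  induction t generalizing s with
  | zero => exact (iterate_vstep_mem_Icc hval hγ hγ1 hp 1 s).1
  | succ t ih =>
    rw [Function.iterate_succ_apply', Function.iterate_succ_apply' (n := t + 1)]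
    simpa using vstep_le_add hval hγ hp le_rfl (iterate_vstep_mem_Icc hval hγ hγ1 hp (t + 1))
      (fun s => by simpa using ih s) s

lemma iterate_succ_vstep_le (hval : IsValueMap val) (hγ : 1 / 2 ≤ γ) (hγ1 : γ < 1)
    (hp : IsPessimistic γ rh Ph pen) (t : ℕ) (s : 𝒮) :
    (vstep val γ rh Ph pen)^[t + 1] (fun _ => 0) s ≤
      (vstep val γ rh Ph pen)^[t] (fun _ => 0) s + γ ^ t := by
  induction t generalizing s with
  | zero =>
    have h : ∀ a b, bell γ rh Ph pen (fun _ => 0) s a b ∈ Set.Icc (0 : ℝ) 1 := by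
      intro a b
      refine ⟨le_max_right _ _, max_le ?_ zero_le_one⟩
      have h1 := (hp.reward s a b).2
      have h2 := hp.nonneg s a b (fun _ => 0)
      rw [Pexp_const (hp.kernel s a b)]
      linarith
    simpa [vstep] using (hval.mem_Icc h).2
  | succ t ih =>
    have hγ0 : 0 ≤ γ := by linarith
    have h := vstep_le_add hval hγ hp (pow_nonneg hγ0 t)
      (iterate_vstep_mem_Icc hval hγ hγ1 hp t) ih s
    rw [pow_succ']
    simpa only [Function.iterate_succ_apply'] using h

variable [DecidableEq 𝒮]

/-- Value iteration with the value of the state `s` clamped to `u`. -/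
def clampIter (val : (𝒜 → ℬ → ℝ) → ℝ) (γ : ℝ) (rh : 𝒮 → 𝒜 → ℬ → ℝ)
    (Ph : 𝒮 → 𝒜 → ℬ → 𝒮 → ℝ) (pen : 𝒮 → 𝒜 → ℬ → (𝒮 → ℝ) → ℝ) (s : 𝒮) (u : ℝ) (t : ℕ) :
    𝒮 → ℝ :=
  (fun V => Function.update (vstep val γ rh Ph pen V) s u)^[t] (fun _ => 0)

lemma clampIter_succ (s : 𝒮) (u : ℝ) (t : ℕ) : clampIter val γ rh Ph pen s u (t + 1) =
    Function.update (vstep val γ rh Ph pen (clampIter val γ rh Ph pen s u t)) s u := by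
  simp only [clampIter, Function.iterate_succ_apply']

lemma clampIter_mem_Icc (hval : IsValueMap val) (hγ : 1 / 2 ≤ γ) (hγ1 : γ < 1)
    (hp : IsPessimistic γ rh Ph pen) (s : 𝒮) {u : ℝ} (hu : u ∈ Set.Icc 0 (1 / (1 - γ)))
    (t : ℕ) (s' : 𝒮) : clampIter val γ rh Ph pen s u t s' ∈ Set.Icc 0 (1 / (1 - γ)) := by
  have h1 : 0 < 1 - γ := by linarith
  induction t generalizing s' with
  | zero => exact ⟨le_rfl, by simp only [clampIter, Function.iterate_zero, id]; positivity⟩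
  | succ t ih =>
    rw [clampIter_succ, Function.update_apply]
    split_ifs
    · exact hu
    · exact vstep_mem_Icc hval hγ hγ1 hp ih s'

lemma abs_clampIter_sub_le (hval : IsValueMap val) (hγ : 1 / 2 ≤ γ) (hγ1 : γ < 1)
    (hp : IsPessimistic γ rh Ph pen) (s : 𝒮) {u : ℝ} (hu : u ∈ Set.Icc 0 (1 / (1 - γ)))
    {T : ℕ} {ε : ℝ} (hT : γ ^ T ≤ (1 - γ) * ε)
    (hus : |u - (vstep val γ rh Ph pen)^[T] (fun _ => 0) s| ≤ ε) (t : ℕ) (s' : 𝒮) :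
    |clampIter val γ rh Ph pen s u t s' - (vstep val γ rh Ph pen)^[T] (fun _ => 0) s'| ≤
      ε + γ ^ t * (1 / (1 - γ)) := by
  have h1 : 0 < 1 - γ := by linarith
  have hγ0 : 0 < γ := by linarith
  have hε : 0 ≤ ε := (abs_nonneg _).trans hus
  have hW := iterate_vstep_mem_Icc hval hγ hγ1 hp T
  have hup := iterate_succ_vstep_le hval hγ hγ1 hp T
  have hlow := iterate_vstep_le_succ hval hγ hγ1 hp T
  simp only [Function.iterate_succ_apply'] at hup hlow
  set W := (vstep val γ rh Ph pen)^[T] (fun _ => 0) with hWdef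
  induction t generalizing s' with
  | zero =>
    obtain ⟨h2, h3⟩ := hW s'
    simp only [clampIter, Function.iterate_zero, id, zero_sub, abs_neg, pow_zero, one_mul]
    rw [abs_of_nonneg h2]
    linarith
  | succ t ih =>
    have he : 0 ≤ ε + γ ^ t * (1 / (1 - γ)) := by positivity
    have hpow : 0 ≤ γ ^ (t + 1) * (1 / (1 - γ)) := by positivity
    have hpow' : γ ^ (t + 1) * (1 / (1 - γ)) = γ * (γ ^ t * (1 / (1 - γ))) := by ring
    rw [clampIter_succ, Function.update_apply]
    split_ifs with hs
    · subst hs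
      linarith
    · have hU := clampIter_mem_Icc hval hγ hγ1 hp s hu t
      have h2 := vstep_le_add hval hγ hp he hW
        (V := clampIter val γ rh Ph pen s u t) (fun t' => by linarith [(abs_le.1 (ih t')).2]) s'
      have h3 := vstep_le_add hval hγ hp he hU
        (V := W) (fun t' => by linarith [(abs_le.1 (ih t')).1]) s'
      have h4 := hup s'
      have h5 := hlow s'
      rw [abs_le]
      constructor <;> nlinarith

lemma exists_grid_close {H W : ℝ} (hH : 0 < H) (hW : W ∈ Set.Icc 0 H) {N : ℕ} (hN : N ≠ 0) :
    ∃ k : Fin (N + 1), |H * k / N - W| ≤ H / N := by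
  have hN0 : (0 : ℝ) < N := by exact_mod_cast Nat.pos_of_ne_zero hN
  have h0 : 0 ≤ W * N / H := div_nonneg (mul_nonneg hW.1 hN0.le) hH.le
  have hk : ⌊W * N / H⌋₊ ≤ N := by
    refine Nat.floor_le_of_le ?_
    rw [div_le_iff₀ hH]
    nlinarith [hW.2]
  refine ⟨⟨⌊W * N / H⌋₊, by omega⟩, ?_⟩
  have h1 := Nat.floor_le h0
  have h2 := Nat.lt_floor_add_one (W * N / H)
  simp only
  set k : ℝ := (⌊W * N / H⌋₊ : ℝ)
  rw [le_div_iff₀ hH] at h1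
  rw [div_lt_iff₀ hH] at h2
  have h3 : H * k / N - W = (H * k - W * N) / N := by field_simp
  rw [h3, abs_div, abs_of_pos hN0]
  gcongr
  rw [abs_le]
  constructor <;> nlinarith

lemma pow_Titer_le {N : ℕ} (hN : N ≠ 0) (hγ : 1 / 2 ≤ γ) (hγ1 : γ < 1) :
    γ ^ Titer γ N ≤ (1 - γ) / N := by
  have h1 : 0 < 1 - γ := by linarith
  have hγ0 : 0 < γ := by linarith
  have hN0 : (0 : ℝ) < N := by exact_mod_cast Nat.pos_of_ne_zero hN
  have hlog : 0 < Real.log (1 / γ) := Real.log_pos (by rw [lt_div_iff₀ hγ0]; linarith)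
  have h2 := Nat.le_ceil (Real.log ((N : ℝ) / (1 - γ)) / Real.log (1 / γ))
  rw [div_le_iff₀ hlog] at h2
  change _ ≤ (Titer γ N : ℝ) * _ at h2
  have h3 : Real.log (1 / γ) = -Real.log γ := by rw [one_div, Real.log_inv]
  have h4 : Real.log ((1 - γ) / N) = -Real.log (N / (1 - γ)) := by
    rw [← Real.log_inv, inv_div]
  rw [← Real.log_le_log_iff (by positivity) (by positivity), Real.log_pow, h4]
  rw [h3] at h2
  linarith

end ZSMG

namespace ZSMG

variable {𝒮 𝒜 ℬ : Type}

/-! ### Counts -/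

section Counts

variable [DecidableEq 𝒮] [DecidableEq 𝒜] [DecidableEq ℬ] {N : ℕ}

lemma rowSum_one (D : Fin N → 𝒮 × 𝒜 × ℬ × 𝒮) (s : 𝒮) (a : 𝒜) (b : ℬ) :
    rowSum D (s, a, b) (fun _ => 1) = cnt D s a b := by
  simp [rowSum, cnt]

lemma cnt_le (D : Fin N → 𝒮 × 𝒜 × ℬ × 𝒮) (s : 𝒮) (a : 𝒜) (b : ℬ) : cnt D s a b ≤ N :=
  (Finset.card_le_univ _).trans (by simp)

end Counts

variable [Fintype 𝒮]

/-! ### Domination of the estimation error by the penalty -/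

lemma mul_Pexp_sub_le_penalty {p q W U : 𝒮 → ℝ} (hp : p ∈ stdSimplex ℝ 𝒮)
    (hq : q ∈ stdSimplex ℝ 𝒮) {γ δ : ℝ} (hγ : 1 / 2 ≤ γ) (hγ1 : γ < 1) {n N : ℕ}
    (hn : n ≠ 0) (hnN : n ≤ N) (hL : 1 / 2 ≤ Real.log ((N : ℝ) / ((1 - γ) * δ)))
    (hW : ∀ s, W s ∈ Set.Icc 0 (1 / (1 - γ))) (hU : ∀ s, U s ∈ Set.Icc 0 (1 / (1 - γ)))
    (hUW : ∀ s, |U s - W s| ≤ 2 * (1 / (1 - γ)) / N)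
    (hdev : ∀ j : ℕ, 1 ≤ j → j ≤ N → n * Pexp p (selfNorm (1 / (2 * (1 / (1 - γ)) * j)) q U) ≤
      3 * Real.log ((N : ℝ) / ((1 - γ) * δ))) :
    γ * (Pexp p W - Pexp q W) ≤ penalty γ δ 2000 N n p W := by
  have h1 : 0 < 1 - γ := by linarith
  have hn0 : (0 : ℝ) < n := by exact_mod_cast Nat.pos_of_ne_zero hn
  have hn1 : (1 : ℝ) ≤ n := by exact_mod_cast Nat.one_le_iff_ne_zero.2 hn
  have hnN' : (n : ℝ) ≤ N := by exact_mod_cast hnN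
  have hpen0 := penalty_nonneg (δ := δ) (Cb := 2000) hγ1 N n p W
  set x := Pexp p W - Pexp q W with hx
  rcases le_or_gt x 0 with hx0 | hx0
  · exact (mul_nonpos_of_nonneg_of_nonpos (by linarith) hx0).trans hpen0
  refine (mul_le_of_le_one_left hx0.le hγ1.le).trans ?_
  have h4N : (0 : ℝ) ≤ 4 / N := by positivity
  unfold penalty
  rw [if_neg hn]
  set L := Real.log ((N : ℝ) / ((1 - γ) * δ)) with hLdef
  have hm : 2 * 2000 * L / ((1 - γ) * n) = 4000 * L * (1 / (1 - γ)) / n := by field_simp; norm_num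
  rw [hm]
  set H := 1 / (1 - γ) with hH
  have hH0 : 0 < H := by positivity
  have hL0 : 0 < L := by linarith
  refine (le_min ?_ ?_).trans (le_add_of_nonneg_right h4N)
  swap
  · have h2 := Pexp_le hp fun s => (hW s).2
    have h3 := le_Pexp hq fun s => (hW s).1
    linarith
  set B := max (√(2000 * L * varP p W / n)) (4000 * L * H / n) with hB
  have hσ := varP_nonneg hp W
  have hB1 : 4000 * L * H / n ≤ B := le_max_right _ _
  have hB0 : 0 < B := lt_of_lt_of_le (by positivity) hB1
  have hB2 : 2000 * L * varP p W / n ≤ B ^ 2 := by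
    have h2 : √(2000 * L * varP p W / n) ≤ B := le_max_left _ _
    exact (Real.sqrt_le_left hB0.le).1 h2
  have hB3 : (4000 * L * H / n) ^ 2 ≤ B ^ 2 := pow_le_pow_left₀ (by positivity) hB1 2
  set η := 2 * H / N with hη
  have hη0 : 0 ≤ η := by positivity
  have hηn : η ≤ 2 * H / n := by rw [hη]; gcongr
  have hxU : x ≤ Pexp p U - Pexp q U + 2 * η := by
    have h2 := Pexp_mono hp (V := W) (W := fun s => U s + η) fun s => by
      linarith [(abs_le.1 (hUW s)).1]
    have h3 := Pexp_mono hq (V := U) (W := fun s => W s + η) fun s => by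
      linarith [(abs_le.1 (hUW s)).2]
    rw [Pexp_add _ _ (fun _ => η), Pexp_const hp] at h2
    rw [Pexp_add _ _ (fun _ => η), Pexp_const hq] at h3
    linarith
  have hbern := empirical_bernstein hp hq hn hnN hH0 (by linarith : 1 / 4 ≤ 3 * L) hU hdev
  have hvarU := varP_le_two_mul_add hp hUW
  have hdiv : ∀ c : ℝ, 0 ≤ c → c ≤ 2000 → c * L * H / n ≤ B / 2 := by
    intro c _ hc
    have : c * L * H / n ≤ 2000 * L * H / n := by gcongr
    have h2 : 4000 * L * H / n = 2 * (2000 * L * H / n) := by ring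
    linarith
  have hηB : 2 * η ≤ B / 2 := by
    refine le_trans ?_ (hdiv 8 (by norm_num) (by norm_num))
    calc 2 * η ≤ 2 * (2 * H / n) := by gcongr
      _ ≤ 8 * L * H / n := by
        rw [← mul_div_assoc]
        refine div_le_div_of_nonneg_right ?_ hn0.le
        nlinarith [mul_le_mul_of_nonneg_right hL hH0.le]
  have hsqrt : 6 * √(3 * L * varP p U / n) ≤ B / 2 := by
    have h2 : √(3 * L * varP p U / n) ≤ B / 12 := by
      refine Real.sqrt_le_iff.2 ⟨by positivity, ?_⟩
      have h3 : 3 * L * varP p U / n ≤ 6 * L * varP p W / n + 6 * L * η ^ 2 / n := by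
        rw [← add_div]
        gcongr
        nlinarith
      have h4 : 6 * L * η ^ 2 / n ≤ 48 * (L * H / n) ^ 2 := by
        calc 6 * L * η ^ 2 / n ≤ 6 * L * η ^ 2 / 1 := by gcongr
          _ ≤ 6 * L * (2 * H / n) ^ 2 := by rw [div_one]; gcongr
          _ = 24 * L * (H / n) ^ 2 := by ring
          _ ≤ 48 * L ^ 2 * (H / n) ^ 2 := mul_le_mul_of_nonneg_right (by nlinarith) (sq_nonneg _)
          _ = _ := by ring
      have h5 : (4000 * L * H / n) ^ 2 = 16000000 * (L * H / n) ^ 2 := by ring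
      have h6 : 2000 * L * varP p W / n = 2000 / 6 * (6 * L * varP p W / n) := by ring
      nlinarith
    linarith
  have h24 : 8 * H * (3 * L) / n ≤ B / 2 := by
    have : 8 * H * (3 * L) / n = 24 * L * H / n := by ring
    rw [this]
    exact hdiv 24 (by norm_num) (by norm_num)
  have := hbern.trans (max_le hsqrt h24)
  linarith

/-! ### Empirical quantities -/

variable [DecidableEq 𝒮] [DecidableEq 𝒜] [DecidableEq ℬ] {N : ℕ}

lemma rowSum_eq_sum_cntT (D : Fin N → 𝒮 × 𝒜 × ℬ × 𝒮) (s : 𝒮) (a : 𝒜) (b : ℬ) (g : 𝒮 → ℝ) :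
    rowSum D (s, a, b) g = ∑ s', (cntT D s a b s' : ℝ) * g s' := by
  simp only [rowSum, cntT, Finset.card_filter, Nat.cast_sum, Finset.sum_mul]
  rw [Finset.sum_comm]
  refine Finset.sum_congr rfl fun m _ => ?_
  rw [Finset.sum_eq_single (D m).2.2.2]
  · by_cases h : (D m).1 = s ∧ (D m).2.1 = a ∧ (D m).2.2.1 = b
    · rw [if_pos h, if_pos (by ext <;> simp [h.1, h.2.1, h.2.2])]
      simp
    · rw [if_neg h, if_neg (fun h' => h (by rw [h']; simp))]
      simp
  · intro t _ ht
    rw [if_neg (fun h' => ht (by rw [h']))]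
    simp
  · simp

lemma cnt_mul_Pexp_Phat {D : Fin N → 𝒮 × 𝒜 × ℬ × 𝒮} {s : 𝒮} {a : 𝒜} {b : ℬ}
    (h : cnt D s a b ≠ 0) (g : 𝒮 → ℝ) :
    cnt D s a b * Pexp (Phat D s a b) g = rowSum D (s, a, b) g := by
  have h0 : (cnt D s a b : ℝ) ≠ 0 := by exact_mod_cast h
  rw [rowSum_eq_sum_cntT, Pexp, Finset.mul_sum]
  refine Finset.sum_congr rfl fun t _ => ?_
  simp only [Phat, if_neg h]
  field_simp

lemma Phat_mem_stdSimplex [Nonempty 𝒮] (D : Fin N → 𝒮 × 𝒜 × ℬ × 𝒮) (s : 𝒮) (a : 𝒜) (b : ℬ) :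
    Phat D s a b ∈ stdSimplex ℝ 𝒮 := by
  refine ⟨fun t => ?_, ?_⟩
  · unfold Phat
    split_ifs <;> positivity
  · by_cases h : cnt D s a b = 0
    · simp [Phat, h]
    · have h0 : (cnt D s a b : ℝ) ≠ 0 := by exact_mod_cast h
      have h1 := cnt_mul_Pexp_Phat h (fun _ => 1)
      rw [rowSum_one] at h1
      simp only [Pexp, mul_one] at h1
      exact mul_left_cancel₀ h0 (by rw [h1, mul_one])

lemma Phat_mkData_congr {x : Fin N → 𝒮 × 𝒜 × ℬ} {y y' : Fin N → 𝒮} {k : 𝒮 × 𝒜 × ℬ}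
    (h : ∀ m, x m ≠ k → y m = y' m) {s : 𝒮} (hs : s ≠ k.1) (a : 𝒜) (b : ℬ) :
    Phat (mkData x y) s a b = Phat (mkData x y') s a b := by
  have hT : ∀ t, cntT (mkData x y) s a b t = cntT (mkData x y') s a b t := by
    intro t
    unfold cntT
    congr 1
    refine Finset.filter_congr fun m _ => ?_
    by_cases hm : x m = k
    · have : ∀ z : Fin N → 𝒮, mkData x z m ≠ (s, a, b, t) := fun z hz => hs (by
        have := congrArg Prod.fst hz
        simpa [mkData, hm] using this.symm)
      simp [this]
    · simp [mkData, h m hm]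
  funext t
  simp only [Phat, hT]
  rfl

/-- The empirical reward with value `c` at unobserved triples. -/
def rewardOr (c : ℝ) (r : 𝒮 → 𝒜 → ℬ → ℝ) (D : Fin N → 𝒮 × 𝒜 × ℬ × 𝒮)
    (s : 𝒮) (a : 𝒜) (b : ℬ) : ℝ :=
  if cnt D s a b = 0 then c else r s a b

/-- The penalty of the algorithm computed from the dataset. -/
def dataPen (γ δ Cb : ℝ) (D : Fin N → 𝒮 × 𝒜 × ℬ × 𝒮) (s : 𝒮) (a : 𝒜) (b : ℬ)
    (V : 𝒮 → ℝ) : ℝ :=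
  penalty γ δ Cb N (cnt D s a b) (Phat D s a b) V

/-- The value estimate after all iterations of the pessimistic value iteration. -/
def dataValue (val : (𝒜 → ℬ → ℝ) → ℝ) (γ δ Cb c : ℝ) (r : 𝒮 → 𝒜 → ℬ → ℝ)
    (D : Fin N → 𝒮 × 𝒜 × ℬ × 𝒮) : 𝒮 → ℝ :=
  (vstep val γ (rewardOr c r D) (Phat D) (dataPen γ δ Cb D))^[Titer γ N] (fun _ => 0)

/-- The leave-one-state-out value estimate. -/
def looValue (val : (𝒜 → ℬ → ℝ) → ℝ) (γ δ Cb c : ℝ) (r : 𝒮 → 𝒜 → ℬ → ℝ)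
    (D : Fin N → 𝒮 × 𝒜 × ℬ × 𝒮) (s : 𝒮) (u : ℝ) : 𝒮 → ℝ :=
  clampIter val γ (rewardOr c r D) (Phat D) (dataPen γ δ Cb D) s u (Titer γ N)

lemma looValue_mkData_congr (val : (𝒜 → ℬ → ℝ) → ℝ) (γ δ Cb c : ℝ) (r : 𝒮 → 𝒜 → ℬ → ℝ)
    {x : Fin N → 𝒮 × 𝒜 × ℬ} {y y' : Fin N → 𝒮} {k : 𝒮 × 𝒜 × ℬ}
    (h : ∀ m, x m ≠ k → y m = y' m) (u : ℝ) :
    looValue val γ δ Cb c r (mkData x y) k.1 u = looValue val γ δ Cb c r (mkData x y') k.1 u := by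
  unfold looValue clampIter
  congr 1
  funext V
  ext s
  rw [Function.update_apply, Function.update_apply]
  split_ifs with hs
  · rfl
  · unfold vstep
    congr 1
    funext a b
    simp only [bell, dataPen, Phat_mkData_congr h hs]
    rfl

lemma log_ratio_bounds {γ δ : ℝ} (hγ : 1 / 2 ≤ γ) (hγ1 : γ < 1) (hδ : δ ∈ Set.Ioo (0 : ℝ) 1)
    (hN : N ≠ 0) : 1 / 2 ≤ Real.log ((N : ℝ) / ((1 - γ) * δ)) := by
  have h1 : 0 < (1 - γ) * δ := mul_pos (by linarith) hδ.1
  have hN1 : (1 : ℝ) ≤ N := by exact_mod_cast Nat.one_le_iff_ne_zero.2 hN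
  have h2 : (2 : ℝ) ≤ N / ((1 - γ) * δ) := by
    rw [le_div_iff₀ h1]
    nlinarith [hδ.1, hδ.2]
  have := Real.log_le_log two_pos h2
  linarith [Real.log_two_gt_d9]

lemma exp_neg_log_ratio_le {γ δ : ℝ} (hγ : 1 / 2 ≤ γ) (hγ1 : γ < 1) (hδ : δ ∈ Set.Ioo (0 : ℝ) 1)
    (N : ℕ) : N * ((N + 1) * N) * Real.exp (-(3 * Real.log ((N : ℝ) / ((1 - γ) * δ)))) ≤ δ / 2 := by
  obtain ⟨hδ0, hδ1⟩ := hδ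
  rcases eq_or_ne N 0 with rfl | hN
  · simp; linarith
  have h1 : 0 < (1 - γ) * δ := mul_pos (by linarith) hδ0
  have hN1 : (1 : ℝ) ≤ N := by exact_mod_cast Nat.one_le_iff_ne_zero.2 hN
  have hN0 : (0 : ℝ) < N := by linarith
  have h2 : Real.exp (-(3 * Real.log ((N : ℝ) / ((1 - γ) * δ)))) = ((1 - γ) * δ / N) ^ 3 := by
    have : -(3 * Real.log ((N : ℝ) / ((1 - γ) * δ))) =
        ((3 : ℕ) : ℝ) * Real.log ((1 - γ) * δ / N) := by
      rw [← inv_div, Real.log_inv]; push_cast; ring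
    rw [this, Real.exp_nat_mul, Real.exp_log (by positivity)]
  rw [h2]
  have h3 : (1 - γ) * δ / N ≤ δ / (2 * N) := by
    rw [div_le_div_iff₀ hN0 (by positivity)]
    nlinarith [mul_pos hδ0 hN0]
  calc N * ((N + 1) * N) * ((1 - γ) * δ / N) ^ 3
      ≤ N * ((N + N) * N) * (δ / (2 * N)) ^ 3 := by gcongr
    _ = δ ^ 3 / 4 := by field_simp; norm_num
    _ ≤ δ / 2 := by nlinarith [mul_pos hδ0 hδ0, mul_lt_mul_of_pos_left hδ1 hδ0, pow_pos hδ0 3,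
        mul_lt_mul_of_pos_left hδ1 (mul_pos hδ0 hδ0)]

lemma isPessimistic_data [Nonempty 𝒮] {γ δ c : ℝ} {r : 𝒮 → 𝒜 → ℬ → ℝ} (hγ : 1 / 2 ≤ γ)
    (hγ1 : γ < 1) (hδ : δ ∈ Set.Ioo (0 : ℝ) 1) (hr : IsReward r) (hc : c ∈ Set.Icc (0 : ℝ) 1)
    (D : Fin N → 𝒮 × 𝒜 × ℬ × 𝒮) :
    IsPessimistic γ (rewardOr c r D) (Phat D) (dataPen γ δ 2000 D) where
  reward s a b := by
    unfold rewardOr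
    split_ifs
    · exact hc
    · exact hr s a b
  kernel := Phat_mem_stdSimplex D
  nonneg s a b V := penalty_nonneg hγ1 _ _ _ _
  shift s a b V c := penalty_congr (varP_add_const (Phat_mem_stdSimplex D s a b) V c)
  mono s a b V V' h hosc := penalty_sub_penalty_le hγ1 (Phat_mem_stdSimplex D s a b)
    (fun hn => by
      have hN : N ≠ 0 := fun h0 => hn (Nat.le_zero.1 (h0 ▸ cnt_le D s a b))
      linarith [log_ratio_bounds hγ hγ1 hδ hN]) h hosc

variable [Fintype 𝒜] [Fintype ℬ]

/-- With high probability, the Bellman backup of the final pessimistic value is dominated by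
the true Bellman backup. -/
lemma one_sub_le_dsProb_bell_le [Nonempty 𝒮] {val : (𝒜 → ℬ → ℝ) → ℝ} (hval : IsValueMap val)
    {γ δ c : ℝ} {r db : 𝒮 → 𝒜 → ℬ → ℝ} {P : 𝒮 → 𝒜 → ℬ → 𝒮 → ℝ} (hγ : 1 / 2 ≤ γ)
    (hγ1 : γ < 1) (hδ : δ ∈ Set.Ioo (0 : ℝ) 1) (hP : IsKernel P) (hr : IsReward r)
    (hdb : IsDist3 db) (hc : c ∈ Set.Icc (0 : ℝ) 1) :
    1 - δ / 2 ≤ dsProb db P {D : Fin N → 𝒮 × 𝒜 × ℬ × 𝒮 | ∀ s a b,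
      bell γ (rewardOr c r D) (Phat D) (dataPen γ δ 2000 D) (dataValue val γ δ 2000 c r D) s a b ≤
        r s a b + γ * Pexp (P s a b) (dataValue val γ δ 2000 c r D)} := by
  have h1 : 0 < 1 - γ := by linarith
  have hH0 : 0 < 1 / (1 - γ) := by positivity
  have hH1 : 1 ≤ 1 / (1 - γ) := by rw [le_div_iff₀ h1]; linarith
  have hu : ∀ i : Fin (N + 1), 1 / (1 - γ) * (i : ℝ) / N ∈ Set.Icc 0 (1 / (1 - γ)) := by
    intro i
    refine ⟨by positivity, div_le_of_le_mul₀ (by positivity) hH0.le ?_⟩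
    gcongr
    exact_mod_cast Nat.lt_succ_iff.1 i.2
  have hpes := isPessimistic_data (N := N) (δ := δ) hγ hγ1 hδ hr hc
  let g : Fin (N + 1) × Fin N → (Fin N → 𝒮 × 𝒜 × ℬ × 𝒮) → 𝒮 × 𝒜 × ℬ → 𝒮 → ℝ :=
    fun i D k => selfNorm (1 / (2 * (1 / (1 - γ)) * (i.2 + 1 : ℕ))) (P k.1 k.2.1 k.2.2)
      (looValue val γ δ 2000 c r D k.1 (1 / (1 - γ) * (i.1 : ℝ) / N))
  have hconc := one_sub_le_dsProb hdb hP (3 * Real.log ((N : ℝ) / ((1 - γ) * δ))) g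
    (fun i x y y' k h => by
      simp only [g]
      rw [looValue_mkData_congr val γ δ 2000 c r h])
    (fun i D k => by
      have hi : (1 : ℝ) ≤ (i.2 + 1 : ℕ) := by exact_mod_cast Nat.le_add_left 1 _
      refine Pexp_exp_selfNorm_le_one (H := 1 / (1 - γ)) (hP _ _ _)
        (clampIter_mem_Icc hval hγ hγ1 (hpes D) _ (hu i.1) _) (by positivity) ?_
      rw [div_mul_eq_mul_div, one_mul, div_le_div_iff₀ (by positivity) two_pos]
      nlinarith)
  have hcard : (Fintype.card (Fin (N + 1) × Fin N) : ℝ) = (N + 1) * N := by simp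
  rw [hcard] at hconc
  have hexp := exp_neg_log_ratio_le hγ hγ1 hδ N
  refine le_trans (by linarith) (hconc.trans (dsProb_mono hdb hP ?_))
  intro D hD s a b
  have hWmem : ∀ t, dataValue val γ δ 2000 c r D t ∈ Set.Icc 0 (1 / (1 - γ)) :=
    iterate_vstep_mem_Icc hval hγ hγ1 (hpes D) _
  have hPW := Pexp_nonneg (hP s a b) fun t => (hWmem t).1
  have hγPW : 0 ≤ γ * Pexp (P s a b) (dataValue val γ δ 2000 c r D) :=
    mul_nonneg (by linarith) hPW
  have hr0 := (hr s a b).1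
  refine max_le ?_ (by linarith)
  by_cases hn : cnt D s a b = 0
  · have h2 := (hpes D).reward s a b
    have h3 : 1 / (1 - γ) ≤ dataPen γ δ 2000 D s a b (dataValue val γ δ 2000 c r D) := by
      unfold dataPen
      rw [hn]
      exact le_penalty_zero _ _ _
    have h4 := Pexp_le (Phat_mem_stdSimplex D s a b) fun t => (hWmem t).2
    have h5 : 1 + γ * (1 / (1 - γ)) = 1 / (1 - γ) := by field_simp; ring
    nlinarith [h2.2]
  · have hN : N ≠ 0 := fun h0 => hn (Nat.le_zero.1 (h0 ▸ cnt_le D s a b))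
    have hN0 : (0 : ℝ) < N := by exact_mod_cast Nat.pos_of_ne_zero hN
    obtain ⟨i, hi⟩ := exists_grid_close hH0 (hWmem s) hN
    have hT := pow_Titer_le hN hγ hγ1
    have hclose : ∀ t, |looValue val γ δ 2000 c r D s (1 / (1 - γ) * (i : ℝ) / N) t -
        dataValue val γ δ 2000 c r D t| ≤ 2 * (1 / (1 - γ)) / N := by
      intro t
      have hT' : γ ^ Titer γ N ≤ (1 - γ) * (1 / (1 - γ) / N) := by
        refine hT.trans ?_
        rw [← mul_div_assoc]
        gcongr
        nlinarith
      refine (abs_clampIter_sub_le hval hγ hγ1 (hpes D) s (hu i) hT' hi _ t).trans ?_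
      have h2 : γ ^ Titer γ N * (1 / (1 - γ)) ≤ 1 / (1 - γ) / N := by
        calc γ ^ Titer γ N * (1 / (1 - γ)) ≤ (1 - γ) / N * (1 / (1 - γ)) := by gcongr
          _ = 1 / N := by field_simp
          _ ≤ 1 / (1 - γ) / N := by gcongr
      have h3 : 2 * (1 / (1 - γ)) / N = 1 / (1 - γ) / N + 1 / (1 - γ) / N := by ring
      linarith
    have hmain := mul_Pexp_sub_le_penalty (Phat_mem_stdSimplex D s a b) (hP s a b) hγ hγ1
      hn (cnt_le D s a b) (log_ratio_bounds hγ hγ1 hδ hN) hWmem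
      (clampIter_mem_Icc hval hγ hγ1 (hpes D) _ (hu i) _) hclose
      (fun j hj hjN => by
        rw [cnt_mul_Pexp_Phat hn]
        have h2 := hD (s, a, b) hn (i, ⟨j - 1, by omega⟩)
        simp only [g, Nat.sub_add_cancel hj] at h2
        exact h2)
    have hrew : rewardOr c r D s a b = r s a b := if_neg hn
    rw [hrew]
    change _ ≤ dataPen γ δ 2000 D s a b (dataValue val γ δ 2000 c r D) at hmain
    linarith

end ZSMG

namespace ZSMG

variable {𝒜 ℬ : Type}

/-! ### Values of matrix games -/

/-- The min-max counterpart of a value map, obtained by exchanging the roles of the players. -/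
lemma IsValueMap.neg {val : (𝒜 → ℬ → ℝ) → ℝ} (h : IsValueMap val) :
    IsValueMap fun M => -val fun a b => -M a b where
  mono M M' hM := neg_le_neg (h.mono _ _ fun a b => neg_le_neg (hM a b))
  shift M c := by
    have := h.shift (fun a b => -M a b) (-c)
    simp only [← neg_add] at this
    rw [this]
    ring
  zero := by simp [h.zero]

variable [Fintype 𝒜] [Fintype ℬ]

/-- The max-min value of a matrix game. -/
def matVal (M : 𝒜 → ℬ → ℝ) : ℝ :=
  ⨆ w : stdSimplex ℝ 𝒜, ⨅ z : stdSimplex ℝ ℬ, pay M w.1 z.1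

lemma pay_mono {M M' : 𝒜 → ℬ → ℝ} {w : 𝒜 → ℝ} {z : ℬ → ℝ} (hw : w ∈ stdSimplex ℝ 𝒜)
    (hz : z ∈ stdSimplex ℝ ℬ) (h : ∀ a b, M a b ≤ M' a b) : pay M w z ≤ pay M' w z :=
  Finset.sum_le_sum fun a _ => Finset.sum_le_sum fun b _ =>
    mul_le_mul_of_nonneg_left (h a b) (mul_nonneg (hw.1 a) (hz.1 b))

lemma pay_const {w : 𝒜 → ℝ} {z : ℬ → ℝ} (hw : w ∈ stdSimplex ℝ 𝒜) (hz : z ∈ stdSimplex ℝ ℬ)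
    (c : ℝ) : pay (fun _ _ => c) w z = c := by
  simp only [pay, ← Finset.sum_mul, ← Finset.mul_sum, hw.2, hz.2, one_mul]

lemma pay_add (M M' : 𝒜 → ℬ → ℝ) (w : 𝒜 → ℝ) (z : ℬ → ℝ) :
    pay (fun a b => M a b + M' a b) w z = pay M w z + pay M' w z := by
  simp only [pay, mul_add, Finset.sum_add_distrib]

lemma pay_smul (c : ℝ) (M : 𝒜 → ℬ → ℝ) (w : 𝒜 → ℝ) (z : ℬ → ℝ) :
    pay (fun a b => c * M a b) w z = c * pay M w z := by
  simp only [pay, Finset.mul_sum]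
  exact Finset.sum_congr rfl fun a _ => Finset.sum_congr rfl fun b _ => by ring

lemma exists_abs_pay_le (M : 𝒜 → ℬ → ℝ) : ∃ C : ℝ, ∀ w ∈ stdSimplex ℝ 𝒜,
    ∀ z ∈ stdSimplex ℝ ℬ, |pay M w z| ≤ C := by
  have hM : ∀ a b, |M a b| ≤ ∑ a, ∑ b, |M a b| := fun a b =>
    (Finset.single_le_sum (f := fun b => |M a b|) (fun _ _ => abs_nonneg _)
      (Finset.mem_univ b)).trans
      (Finset.single_le_sum (f := fun a => ∑ b, |M a b|)
        (fun _ _ => Finset.sum_nonneg fun _ _ => abs_nonneg _) (Finset.mem_univ a))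
  refine ⟨∑ a, ∑ b, |M a b|, fun w hw z hz => abs_le.2 ⟨?_, ?_⟩⟩
  · rw [← pay_const hw hz (-_)]
    exact pay_mono hw hz fun a b => (abs_le.1 (hM a b)).1
  · rw [← pay_const hw hz (∑ a, ∑ b, |M a b|)]
    exact pay_mono hw hz fun a b => (abs_le.1 (hM a b)).2

lemma bddBelow_pay (M : 𝒜 → ℬ → ℝ) (w : stdSimplex ℝ 𝒜) :
    BddBelow (Set.range fun z : stdSimplex ℝ ℬ => pay M w.1 z.1) := by
  obtain ⟨C, hC⟩ := exists_abs_pay_le M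
  exact ⟨-C, by rintro _ ⟨z, rfl⟩; exact (abs_le.1 (hC w.1 w.2 z.1 z.2)).1⟩

variable [Nonempty ℬ]

lemma bddAbove_iInf_pay (M : 𝒜 → ℬ → ℝ) :
    BddAbove (Set.range fun w : stdSimplex ℝ 𝒜 => ⨅ z : stdSimplex ℝ ℬ, pay M w.1 z.1) := by
  obtain ⟨C, hC⟩ := exists_abs_pay_le M
  obtain ⟨z⟩ := (inferInstance : Nonempty (stdSimplex ℝ ℬ))
  refine ⟨C, ?_⟩
  rintro _ ⟨w, rfl⟩
  exact (ciInf_le (bddBelow_pay M w) z).trans (abs_le.1 (hC w.1 w.2 z.1 z.2)).2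

lemma matVal_mono {M M' : 𝒜 → ℬ → ℝ} (h : ∀ a b, M a b ≤ M' a b) : matVal M ≤ matVal M' :=
  ciSup_mono (bddAbove_iInf_pay M') fun w =>
    ciInf_mono (bddBelow_pay M w) fun z => pay_mono w.2 z.2 h

variable [Nonempty 𝒜]

lemma matVal_add_const (M : 𝒜 → ℬ → ℝ) (c : ℝ) :
    matVal (fun a b => M a b + c) = matVal M + c := by
  have h : ∀ (w : stdSimplex ℝ 𝒜) (z : stdSimplex ℝ ℬ),
      pay (fun a b => M a b + c) w.1 z.1 = pay M w.1 z.1 + c := fun w z => by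
    rw [pay_add M (fun _ _ => c), pay_const w.2 z.2]
  simp only [matVal, h]
  rw [ciSup_add (bddAbove_iInf_pay M)]
  exact congrArg _ (funext fun w => (ciInf_add (bddBelow_pay M w) c).symm)

lemma matVal_zero : matVal (fun (_ : 𝒜) (_ : ℬ) => (0 : ℝ)) = 0 := by
  simp [matVal, pay]

lemma isValueMap_matVal : IsValueMap (matVal : (𝒜 → ℬ → ℝ) → ℝ) :=
  ⟨fun _ _ h => matVal_mono h, matVal_add_const, matVal_zero⟩

lemma IsMatrixNash.matVal_eq {M : 𝒜 → ℬ → ℝ} {w : 𝒜 → ℝ} {z : ℬ → ℝ}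
    (h : IsMatrixNash M w z) : matVal M = pay M w z := by
  obtain ⟨hw, hz, h1, h2⟩ := h
  apply le_antisymm
  · exact ciSup_le fun w' => (ciInf_le (bddBelow_pay M w') ⟨z, hz⟩).trans (h1 w'.1 w'.2)
  · exact (le_ciInf fun z' : stdSimplex ℝ ℬ => h2 z'.1 z'.2).trans
      (le_ciSup (bddAbove_iInf_pay M) ⟨w, hw⟩)

end ZSMG

namespace ZSMG

variable {𝒮 𝒜 ℬ : Type}

lemma nonempty_policy [Fintype 𝒜] [Nonempty 𝒜] : Nonempty {μ : 𝒮 → 𝒜 → ℝ // IsPolicy μ} := by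
  obtain ⟨w⟩ := (inferInstance : Nonempty (stdSimplex ℝ 𝒜))
  exact ⟨⟨fun _ => w.1, fun _ => w.2⟩⟩

variable [Fintype 𝒮]

/-! ### Action values along the iterations -/

/-- One step of pessimistic iteration on action values. -/
def qstep (val : (𝒜 → ℬ → ℝ) → ℝ) (γ : ℝ) (rh : 𝒮 → 𝒜 → ℬ → ℝ)
    (Ph : 𝒮 → 𝒜 → ℬ → 𝒮 → ℝ) (pen : 𝒮 → 𝒜 → ℬ → (𝒮 → ℝ) → ℝ) (Q : 𝒮 → 𝒜 → ℬ → ℝ) :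
    𝒮 → 𝒜 → ℬ → ℝ :=
  bell γ rh Ph pen fun s => val (Q s)

section Iteration

variable {val : (𝒜 → ℬ → ℝ) → ℝ} {γ : ℝ} {rh : 𝒮 → 𝒜 → ℬ → ℝ}
  {Ph : 𝒮 → 𝒜 → ℬ → 𝒮 → ℝ} {pen : 𝒮 → 𝒜 → ℬ → (𝒮 → ℝ) → ℝ}

lemma val_iterate_qstep (hval : IsValueMap val) (t : ℕ) :
    (fun s => val ((qstep val γ rh Ph pen)^[t] (fun _ _ _ => 0) s)) =
      (vstep val γ rh Ph pen)^[t] (fun _ => 0) := by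
  induction t with
  | zero => simp [hval.zero]
  | succ t ih =>
    rw [Function.iterate_succ_apply', Function.iterate_succ_apply', ← ih]
    rfl

lemma iterate_qstep_le_bell (hval : IsValueMap val) (hγ : 1 / 2 ≤ γ) (hγ1 : γ < 1)
    (hp : IsPessimistic γ rh Ph pen) (t : ℕ) (s : 𝒮) (a : 𝒜) (b : ℬ) :
    (qstep val γ rh Ph pen)^[t] (fun _ _ _ => 0) s a b ≤
      bell γ rh Ph pen ((vstep val γ rh Ph pen)^[t] (fun _ => 0)) s a b := by
  cases t with
  | zero => exact le_max_right _ _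
  | succ t =>
    rw [Function.iterate_succ_apply', qstep, val_iterate_qstep hval]
    simpa using bell_le_add hγ hp le_rfl (iterate_vstep_mem_Icc hval hγ hγ1 hp (t + 1))
      (fun s => by simpa using iterate_vstep_le_succ hval hγ hγ1 hp t s) s a b

end Iteration

section Data

variable [Fintype 𝒜] [Fintype ℬ] [DecidableEq 𝒮] [DecidableEq 𝒜] [DecidableEq ℬ] {N : ℕ}

lemma QpePlus_eq [Nonempty 𝒮] [Nonempty 𝒜] [Nonempty ℬ] {γ : ℝ} (hγ1 : γ < 1) (δ Cb : ℝ)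
    (r : 𝒮 → 𝒜 → ℬ → ℝ) (D : Fin N → 𝒮 × 𝒜 × ℬ × 𝒮) :
    QpePlus γ δ Cb r D = fun s a b => 1 / (1 - γ) -
      (qstep (fun M => -matVal fun a b => -M a b) γ
        (rewardOr 1 (fun s a b => 1 - r s a b) D) (Phat D) (dataPen γ δ Cb D))^[Titer γ N]
        (fun _ _ _ => 0) s a b := by
  have hH : 1 / (1 - γ) = 1 + γ * (1 / (1 - γ)) := by
    have : (1 - γ) ≠ 0 := by linarith
    field_simp
    ring
  unfold QpePlus
  generalize Titer γ N = t
  induction t with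
  | zero => simp
  | succ t ih =>
    rw [Function.iterate_succ_apply', Function.iterate_succ_apply', ih]
    generalize (qstep (fun M : 𝒜 → ℬ → ℝ => -matVal fun a b => -M a b) γ
      (rewardOr 1 (fun s a b => 1 - r s a b) D) (Phat D) (dataPen γ δ Cb D))^[t]
      (fun _ _ _ => 0) = Q
    have hV : valQ (fun s a b => 1 / (1 - γ) - Q s a b) =
        fun s => 1 / (1 - γ) - -matVal fun a b => -Q s a b := by
      funext s
      rw [sub_neg_eq_add, add_comm, ← matVal_add_const]
      exact congrArg matVal (by funext a b; ring)
    funext s a b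
    have hmem := Phat_mem_stdSimplex D s a b
    simp only [TpePlus, qstep, bell, hV, dataPen]
    rw [penalty_congr (varP_const_sub hmem _ _), Pexp_sub _ (fun _ => _), Pexp_const hmem,
      ← min_sub_sub_left, sub_zero]
    congr 1
    have hr : rhat r D s a b = 1 - rewardOr 1 (fun s a b => 1 - r s a b) D s a b := by
      unfold rhat rewardOr
      split_ifs <;> ring
    rw [hr]
    linear_combination -hH

variable [Nonempty 𝒮] [Nonempty 𝒜] [Nonempty ℬ] {γ δ : ℝ} {r db : 𝒮 → 𝒜 → ℬ → ℝ}
  {P : 𝒮 → 𝒜 → ℬ → 𝒮 → ℝ}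

/-- With high probability, the lower action-value estimate is a subsolution of the true Bellman
equation. -/
lemma one_sub_le_dsProb_QpeMinus_le (hγ : 1 / 2 ≤ γ) (hγ1 : γ < 1) (hδ : δ ∈ Set.Ioo (0 : ℝ) 1)
    (hP : IsKernel P) (hr : IsReward r) (hdb : IsDist3 db) :
    1 - δ / 2 ≤ dsProb db P {D : Fin N → 𝒮 × 𝒜 × ℬ × 𝒮 | ∀ s a b,
      QpeMinus γ δ 2000 r D s a b ≤
        r s a b + γ * Pexp (P s a b) (valQ (QpeMinus γ δ 2000 r D))} := by
  have hc : (0 : ℝ) ∈ Set.Icc (0 : ℝ) 1 := by simp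
  refine (one_sub_le_dsProb_bell_le isValueMap_matVal hγ hγ1 hδ hP hr hdb hc).trans
    (dsProb_mono hdb hP fun D hD s a b => ?_)
  have hV : valQ (QpeMinus γ δ 2000 r D) = dataValue matVal γ δ 2000 0 r D :=
    val_iterate_qstep isValueMap_matVal _
  rw [hV]
  exact (iterate_qstep_le_bell isValueMap_matVal hγ hγ1
    (isPessimistic_data hγ hγ1 hδ hr hc D) _ s a b).trans (hD s a b)

/-- With high probability, the upper action-value estimate is a supersolution of the true Bellman
equation. -/
lemma one_sub_le_dsProb_le_QpePlus (hγ : 1 / 2 ≤ γ) (hγ1 : γ < 1) (hδ : δ ∈ Set.Ioo (0 : ℝ) 1)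
    (hP : IsKernel P) (hr : IsReward r) (hdb : IsDist3 db) :
    1 - δ / 2 ≤ dsProb db P {D : Fin N → 𝒮 × 𝒜 × ℬ × 𝒮 | ∀ s a b,
      r s a b + γ * Pexp (P s a b) (valQ (QpePlus γ δ 2000 r D)) ≤
        QpePlus γ δ 2000 r D s a b} := by
  have hc : (1 : ℝ) ∈ Set.Icc (0 : ℝ) 1 := by simp
  have hr' : IsReward fun s a b => 1 - r s a b := fun s a b =>
    ⟨sub_nonneg.2 (hr s a b).2, sub_le_self _ (hr s a b).1⟩
  have hval := (isValueMap_matVal (𝒜 := 𝒜) (ℬ := ℬ)).neg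
  have hH : 1 / (1 - γ) = 1 + γ * (1 / (1 - γ)) := by
    have : (1 - γ) ≠ 0 := by linarith
    field_simp
    ring
  refine (one_sub_le_dsProb_bell_le hval hγ hγ1 hδ hP hr' hdb hc).trans
    (dsProb_mono hdb hP fun D hD s a b => ?_)
  have hV : valQ (QpePlus γ δ 2000 r D) = fun s => 1 / (1 - γ) -
      dataValue (fun M => -matVal fun a b => -M a b) γ δ 2000 1 (fun s a b => 1 - r s a b) D s := by
    rw [dataValue, ← val_iterate_qstep hval, QpePlus_eq hγ1]
    funext s
    rw [sub_neg_eq_add, add_comm, ← matVal_add_const]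
    exact congrArg matVal (by funext a b; ring)
  have h1 := (iterate_qstep_le_bell hval hγ hγ1
    (isPessimistic_data hγ hγ1 hδ hr' hc D) (Titer γ N) s a b).trans (hD s a b)
  rw [hV, Pexp_sub _ (fun _ => _), Pexp_const (hP s a b), QpePlus_eq hγ1]
  linarith

end Data

/-! ### Policy evaluation -/

lemma nonpos_of_le_mul_Pexp [Nonempty 𝒮] {M : 𝒮 → 𝒮 → ℝ} (hM : ∀ s, M s ∈ stdSimplex ℝ 𝒮) {γ : ℝ}
    (hγ0 : 0 ≤ γ) (hγ1 : γ < 1) {f : 𝒮 → ℝ} (h : ∀ s, f s ≤ γ * Pexp (M s) f) (s : 𝒮) :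
    f s ≤ 0 := by
  obtain ⟨m, hm⟩ := Finite.exists_max f
  have h1 := Pexp_le (hM m) hm
  have h2 := h m
  refine (hm s).trans ?_
  nlinarith

section Policy

variable [Fintype 𝒜] [Fintype ℬ] {γ : ℝ} {P : 𝒮 → 𝒜 → ℬ → 𝒮 → ℝ}
  {r : 𝒮 → 𝒜 → ℬ → ℝ} {μ : 𝒮 → 𝒜 → ℝ} {ν : 𝒮 → ℬ → ℝ}

lemma Pexp_Pmat (V : 𝒮 → ℝ) (s : 𝒮) :
    Pexp (Pmat P μ ν s) V = pay (fun a b => Pexp (P s a b) V) (μ s) (ν s) := by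
  simp only [Pexp, Pmat, Matrix.of_apply, pay, Finset.sum_mul, Finset.mul_sum]
  rw [Finset.sum_comm]
  refine Finset.sum_congr rfl fun a _ => ?_
  rw [Finset.sum_comm]
  exact Finset.sum_congr rfl fun b _ => Finset.sum_congr rfl fun t _ => by ring

lemma rPol_add_mul_Pexp (V : 𝒮 → ℝ) (s : 𝒮) :
    rPol r μ ν s + γ * Pexp (Pmat P μ ν s) V =
      pay (fun a b => r s a b + γ * Pexp (P s a b) V) (μ s) (ν s) := by
  rw [Pexp_Pmat, pay_add, pay_smul]
  rfl

lemma Pmat_mem_stdSimplex (hP : IsKernel P) (hμ : IsPolicy μ) (hν : IsPolicy ν) (s : 𝒮) :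
    Pmat P μ ν s ∈ stdSimplex ℝ 𝒮 := by
  refine ⟨fun t => Finset.sum_nonneg fun a _ => Finset.sum_nonneg fun b _ =>
    mul_nonneg (mul_nonneg ((hμ s).1 a) ((hν s).1 b)) ((hP s a b).1 t), ?_⟩
  have h := Pexp_Pmat (P := P) (μ := μ) (ν := ν) (fun _ => 1) s
  simp only [Pexp_const (hP _ _ _), pay_const (hμ s) (hν s)] at h
  simpa [Pexp] using h

variable [DecidableEq 𝒮] [Nonempty 𝒮]

lemma Vpol_eq (hγ0 : 0 ≤ γ) (hγ1 : γ < 1) (hP : IsKernel P) (hμ : IsPolicy μ) (hν : IsPolicy ν)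
    (s : 𝒮) : Vpol γ P r μ ν s = rPol r μ ν s + γ * Pexp (Pmat P μ ν s) (Vpol γ P r μ ν) := by
  have hMs := Pmat_mem_stdSimplex hP hμ hν
  have hmul : ∀ (f : 𝒮 → ℝ) s, ((1 - γ • Pmat P μ ν).mulVec f) s =
      f s - γ * Pexp (Pmat P μ ν s) f := fun f s => by
    rw [Matrix.sub_mulVec, Matrix.one_mulVec, Matrix.smul_mulVec]
    rfl
  have hunit : IsUnit (1 - γ • Pmat P μ ν) := by
    rw [← Matrix.mulVec_injective_iff_isUnit]
    intro f g hfg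
    have hle : ∀ f g : 𝒮 → ℝ, (1 - γ • Pmat P μ ν).mulVec f = (1 - γ • Pmat P μ ν).mulVec g →
        ∀ s, f s ≤ g s := fun f g hfg s => by
      refine sub_nonpos.1 (nonpos_of_le_mul_Pexp hMs hγ0 hγ1 (f := fun s => f s - g s)
        (fun s => ?_) s)
      have := congrFun hfg s
      rw [hmul, hmul] at this
      rw [Pexp_sub]
      linarith
    exact funext fun s => le_antisymm (hle f g hfg s) (hle g f hfg.symm s)
  have h := hmul (Vpol γ P r μ ν) s
  rw [Vpol, Matrix.mulVec_mulVec, Matrix.mul_nonsing_inv _ ((Matrix.isUnit_iff_isUnit_det _).1 hunit),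
    Matrix.one_mulVec] at h
  rw [Vpol]
  linarith

lemma le_Vpol (hγ0 : 0 ≤ γ) (hγ1 : γ < 1) (hP : IsKernel P) (hμ : IsPolicy μ) (hν : IsPolicy ν)
    {W : 𝒮 → ℝ} (hW : ∀ s, W s ≤ pay (fun a b => r s a b + γ * Pexp (P s a b) W) (μ s) (ν s))
    (s : 𝒮) : W s ≤ Vpol γ P r μ ν s := by
  refine sub_nonpos.1 (nonpos_of_le_mul_Pexp (Pmat_mem_stdSimplex hP hμ hν) hγ0 hγ1
    (f := fun s => W s - Vpol γ P r μ ν s) (fun s => ?_) s)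
  have h1 := hW s
  have h2 := Vpol_eq (r := r) hγ0 hγ1 hP hμ hν s
  rw [← rPol_add_mul_Pexp] at h1
  rw [Pexp_sub]
  linarith

lemma Vpol_le (hγ0 : 0 ≤ γ) (hγ1 : γ < 1) (hP : IsKernel P) (hμ : IsPolicy μ) (hν : IsPolicy ν)
    {W : 𝒮 → ℝ} (hW : ∀ s, pay (fun a b => r s a b + γ * Pexp (P s a b) W) (μ s) (ν s) ≤ W s)
    (s : 𝒮) : Vpol γ P r μ ν s ≤ W s := by
  refine sub_nonpos.1 (nonpos_of_le_mul_Pexp (Pmat_mem_stdSimplex hP hμ hν) hγ0 hγ1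
    (f := fun s => Vpol γ P r μ ν s - W s) (fun s => ?_) s)
  have h1 := hW s
  have h2 := Vpol_eq (r := r) hγ0 hγ1 hP hμ hν s
  rw [← rPol_add_mul_Pexp] at h1
  rw [Pexp_sub]
  linarith

lemma IsOutputMax.valQ_le_Vpol [Nonempty 𝒜] [Nonempty ℬ] (hγ0 : 0 ≤ γ) (hγ1 : γ < 1)
    (hP : IsKernel P) {Q : 𝒮 → 𝒜 → ℬ → ℝ} (hμ : IsOutputMax Q μ) (hν : IsPolicy ν)
    (hQ : ∀ s a b, Q s a b ≤ r s a b + γ * Pexp (P s a b) (valQ Q)) (s : 𝒮) :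
    valQ Q s ≤ Vpol γ P r μ ν s := by
  choose z hz using hμ
  refine le_Vpol hγ0 hγ1 hP (fun s => (hz s).1) hν (fun s => ?_) s
  calc valQ Q s = pay (Q s) (μ s) (z s) := (hz s).matVal_eq
    _ ≤ pay (Q s) (μ s) (ν s) := (hz s).2.2.2 _ (hν s)
    _ ≤ _ := pay_mono (hz s).1 (hν s) (hQ s)

lemma IsOutputMin.Vpol_le_valQ [Nonempty 𝒜] [Nonempty ℬ] (hγ0 : 0 ≤ γ) (hγ1 : γ < 1)
    (hP : IsKernel P) {Q : 𝒮 → 𝒜 → ℬ → ℝ} (hν : IsOutputMin Q ν) (hμ : IsPolicy μ)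
    (hQ : ∀ s a b, r s a b + γ * Pexp (P s a b) (valQ Q) ≤ Q s a b) (s : 𝒮) :
    Vpol γ P r μ ν s ≤ valQ Q s := by
  choose w hw using hν
  refine Vpol_le hγ0 hγ1 hP hμ (fun s => (hw s).2.1) (fun s => ?_) s
  calc _ ≤ pay (Q s) (μ s) (ν s) := pay_mono (hμ s) (hw s).2.1 (hQ s)
    _ ≤ pay (Q s) (w s) (ν s) := (hw s).2.2.1 _ (hμ s)
    _ = valQ Q s := (hw s).matVal_eq.symm

end Policy

end ZSMG

open ZSMG in
/-- Lemma 2, pessimism: with probability `1−δ`, the pessimistic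
Q and value estimates bracket the true quantities for every output of
VI-LCB-Game. -/
theorem statement7 :
    ∃ Cb : ℝ, 0 < Cb ∧
      ∀ (𝒮 𝒜 ℬ : Type) [Fintype 𝒮] [Fintype 𝒜] [Fintype ℬ]
        [DecidableEq 𝒮] [DecidableEq 𝒜] [DecidableEq ℬ]
        [Nonempty 𝒮] [Nonempty 𝒜] [Nonempty ℬ],
      ∀ γ δ : ℝ, 1 / 2 ≤ γ → γ < 1 → δ ∈ Set.Ioo (0 : ℝ) 1 →
      ∀ P : 𝒮 → 𝒜 → ℬ → 𝒮 → ℝ, IsKernel P →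
      ∀ r : 𝒮 → 𝒜 → ℬ → ℝ, IsReward r →
      ∀ db : 𝒮 → 𝒜 → ℬ → ℝ, IsDist3 db →
      ∀ N : ℕ,
        1 - δ ≤ dsProb db P {D : Fin N → 𝒮 × 𝒜 × ℬ × 𝒮 |
          ∀ (μh : 𝒮 → 𝒜 → ℝ) (νh : 𝒮 → ℬ → ℝ),
            IsOutputMax (QpeMinus γ δ Cb r D) μh →
            IsOutputMin (QpePlus γ δ Cb r D) νh →
              (∀ s a b, QpeMinus γ δ Cb r D s a b ≤ QmuStar γ P r μh s a b) ∧
              (∀ s a b, QstarNu γ P r νh s a b ≤ QpePlus γ δ Cb r D s a b) ∧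
              (∀ s, valQ (QpeMinus γ δ Cb r D) s ≤ VmuStar γ P r μh s) ∧
              (∀ s, VstarNu γ P r νh s ≤ valQ (QpePlus γ δ Cb r D) s)} := by
  refine ⟨2000, by norm_num, ?_⟩
  intro 𝒮 𝒜 ℬ _ _ _ _ _ _ _ _ _ γ δ hγ hγ1 hδ P hP r hr db hdb N
  have hγ0 : 0 ≤ γ := by linarith
  have hmax : Nonempty {μ : 𝒮 → 𝒜 → ℝ // IsPolicy μ} := nonempty_policy
  have hmin : Nonempty {ν : 𝒮 → ℬ → ℝ // IsPolicy ν} := nonempty_policy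
  have h1 := one_sub_le_dsProb_QpeMinus_le (N := N) hγ hγ1 hδ hP hr hdb
  have h2 := one_sub_le_dsProb_le_QpePlus (N := N) hγ hγ1 hδ hP hr hdb
  have h12 := (add_le_add h1 h2).trans (sub_le_iff_le_add.1 (dsProb_inter hdb hP))
  refine (by linarith : 1 - δ ≤ _).trans (dsProb_mono hdb hP ?_)
  rintro D ⟨hD1, hD2⟩ μh νh hμ hν
  have hlo := fun (ν : {ν : 𝒮 → ℬ → ℝ // IsPolicy ν}) =>
    hμ.valQ_le_Vpol hγ0 hγ1 hP ν.2 hD1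
  have hup := fun (μ : {μ : 𝒮 → 𝒜 → ℝ // IsPolicy μ}) =>
    hν.Vpol_le_valQ hγ0 hγ1 hP μ.2 hD2
  refine ⟨fun s a b => le_ciInf fun ν => (hD1 s a b).trans ?_,
    fun s a b => ciSup_le fun μ => le_trans ?_ (hD2 s a b),
    fun s => le_ciInf fun ν => hlo ν s, fun s => ciSup_le fun μ => hup μ s⟩
  · exact add_le_add_right (mul_le_mul_of_nonneg_left (Pexp_mono (hP s a b) (hlo ν)) hγ0) _
  · exact add_le_add_right (mul_le_mul_of_nonneg_left (Pexp_mono (hP s a b) (hup μ)) hγ0) _
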